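/- Under Assumptions 1.1, 1.2 and 1.3, there exists a random variable Ĉ₈ with 1 ≤ Ĉ₈ < ∞ everywhere such that, almost surely on Λ, for every real ε > 0: limsup_{n→∞} γ_n^{q̂} · sup_{k≥n} ‖θ_k − θ_n‖ ≤ Ĉ₈ φ_ε(ξ), where q̂ = min{r, r̂} − 1. -/

import Mathlib

open MeasureTheory Filter

/-!
Cut the trajectory into blocks of algorithmic time comparable to a small `T`. Over one block the
iteration is a gradient step of length about `T` up to the accumulated noise, which Abel summation
bounds by `s j ^ (-r)` on the `j`-th block for any `s > ξ`. Hence, for the block values `y j` of `f`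
and the block gradients `g j`, `y (j + 1) ≤ y j - c g j ^ 2 + K s ^ 2 j ^ (-2 r)`. The perturbation
is summable, so `y` converges, and after subtraction of the limit the Łojasiewicz inequality bounds
`g ^ 2` below by a power `y ^ (1 + 1 / p)` with `p = 2 ρ - 1`; the recursion then forces decay of
`y` like `N ^ (-p)`. Cauchy–Schwarz on the dyadic ranges `[N, 2 N)` turns this into
`∑_{j ≥ N} g j ≤ C s N ^ (-(ρ - 1))`, and the oscillation of the trajectory is at most a multiple of
`T g j + s j ^ (-r)` on the `j`-th block. The bound is linear in `s` because the recursion is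
invariant under the scaling `y / s ^ 2`, `g / s`. If `r < r̂` one takes `ρ = r`: the Łojasiewicz
exponent has room to spare, so `s` may tend to `ξ`; if `r̂ ≤ r` one takes `ρ = r̂` and any `s > ξ`
large enough to absorb the Łojasiewicz constant.
-/

open scoped NNReal Topology Gradient

section PowerSequences

theorem one_add_mul_le_one_sub_rpow_neg {a x : ℝ} (hx : x < 1) (ha : 0 ≤ a) :
    1 + a * x ≤ (1 - x) ^ (-a) := by
  have hpos : 0 < 1 - x := by linarith
  have hlog := mul_le_mul_of_nonneg_left (Real.log_le_sub_one_of_pos hpos) ha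
  have hexp := Real.add_one_le_exp (Real.log (1 - x) * -a)
  rw [Real.rpow_def_of_pos hpos]
  linarith

theorem rpow_neg_add_one_le_mul_sub {a t : ℝ} (ha : 0 < a) (ht : 1 ≤ t) :
    t ^ (-(a + 1)) ≤ 2 ^ (a + 1) / a * (t ^ (-a) - (t + 1) ^ (-a)) := by
  have ht₁ : 0 < t + 1 := by linarith
  have hbern : (t + 1) ^ (-a) + a * (t + 1) ^ (-(a + 1)) ≤ t ^ (-a) := by
    have h := one_add_mul_le_one_sub_rpow_neg (x := 1 / (t + 1))
      (by rw [div_lt_one ht₁]; linarith) ha.le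
    rw [show 1 - 1 / (t + 1) = t / (t + 1) by field_simp; ring,
      Real.div_rpow (by linarith) ht₁.le, le_div_iff₀ (by positivity)] at h
    rw [neg_add', Real.rpow_sub_one ht₁.ne']
    linear_combination h
  have hdouble : t ^ (-(a + 1)) ≤ 2 ^ (a + 1) * (t + 1) ^ (-(a + 1)) := by
    have h : (2 * t) ^ (-(a + 1)) ≤ (t + 1) ^ (-(a + 1)) :=
      Real.rpow_le_rpow_of_nonpos ht₁ (by linarith) (by linarith)
    rwa [Real.mul_rpow zero_le_two (by linarith), Real.rpow_neg zero_le_two,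
      inv_mul_le_iff₀ (by positivity)] at h
  calc t ^ (-(a + 1)) ≤ 2 ^ (a + 1) * (t + 1) ^ (-(a + 1)) := hdouble
    _ = 2 ^ (a + 1) / a * (a * (t + 1) ^ (-(a + 1))) := by field_simp
    _ ≤ 2 ^ (a + 1) / a * (t ^ (-a) - (t + 1) ^ (-a)) := by gcongr; linarith

theorem sum_Ico_add_le_of_add_le {h T : ℕ → ℝ} {j m : ℕ} (hjm : j ≤ m)
    (hT : ∀ i, j ≤ i → h i + T (i + 1) ≤ T i) : ∑ i ∈ Finset.Ico j m, h i + T m ≤ T j := by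
  induction m, hjm using Nat.le_induction with
  | base => simp
  | succ m hjm ih =>
    rw [Finset.sum_Ico_succ_top hjm]
    linarith [hT m hjm]

/-- An explicit majorant of the tail `∑_{i ≥ j} b i^(-(a + 1))`. It is itself a multiple of
`j ^ (-a)` and absorbs the term `b j^(-(a + 1))` when `j` is increased by one, which is what makes
summable perturbations of a descent recursion disappear. -/
noncomputable def powerTail (b a t : ℝ) : ℝ := b * (2 ^ (a + 1) / a) * t ^ (-a)

theorem powerTail_nonneg {b a t : ℝ} (hb : 0 ≤ b) (ha : 0 ≤ a) (ht : 0 ≤ t) :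
    0 ≤ powerTail b a t := by
  unfold powerTail
  positivity

theorem tendsto_powerTail (b : ℝ) {a : ℝ} (ha : 0 < a) :
    Tendsto (fun j : ℕ ↦ powerTail b a j) atTop (𝓝 0) := by
  simpa only [mul_zero, powerTail, Function.comp_def] using
    ((tendsto_rpow_neg_atTop ha).comp tendsto_natCast_atTop_atTop).const_mul
      (b * (2 ^ (a + 1) / a))

theorem rpow_add_powerTail_add_one_le {b a t : ℝ} (hb : 0 ≤ b) (ha : 0 < a) (ht : 1 ≤ t) :
    b * t ^ (-(a + 1)) + powerTail b a (t + 1) ≤ powerTail b a t := by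
  have h := mul_le_mul_of_nonneg_left (rpow_neg_add_one_le_mul_sub ha ht) hb
  unfold powerTail
  linarith

theorem sum_Ico_rpow_le_powerTail {a : ℝ} (ha : 0 < a) {j m : ℕ} (hj : 1 ≤ j) (hjm : j ≤ m) :
    ∑ i ∈ Finset.Ico j m, (i : ℝ) ^ (-(a + 1)) ≤ powerTail 1 a j := by
  refine le_trans (le_add_of_nonneg_right (powerTail_nonneg zero_le_one ha.le m.cast_nonneg)) <|
    sum_Ico_add_le_of_add_le (T := fun i ↦ powerTail 1 a i) hjm fun i hi ↦ ?_
  simpa only [one_mul, Nat.cast_add, Nat.cast_one] using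
    rpow_add_powerTail_add_one_le zero_le_one ha (Nat.one_le_cast.2 (hj.trans hi))

theorem sum_Ico_le_of_dyadic_blocks {h : ℕ → ℝ} (hh : ∀ i, 0 ≤ h i) {q A : ℝ} (hq : 0 < q)
    (hA : 0 ≤ A) {J N : ℕ} (hJ : 1 ≤ J)
    (hblock : ∀ N, J ≤ N → ∑ i ∈ Finset.Ico N (2 * N), h i ≤ A * (N : ℝ) ^ (-q)) (hN : J ≤ N)
    (m : ℕ) : ∑ i ∈ Finset.Ico N m, h i ≤ A / (1 - 2 ^ (-q)) * (N : ℝ) ^ (-q) := by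
  have hgeom : 0 < 1 - (2 : ℝ) ^ (-q) :=
    sub_pos.2 (Real.rpow_lt_one_of_one_lt_of_neg one_lt_two (neg_lt_zero.2 hq))
  have hpow (k : ℕ) : ∀ N, J ≤ N →
      ∑ i ∈ Finset.Ico N (2 ^ k * N), h i ≤ A / (1 - 2 ^ (-q)) * (N : ℝ) ^ (-q) := by
    induction k with
    | zero =>
      intro N _
      simp only [pow_zero, one_mul, Finset.Ico_self, Finset.sum_empty]
      positivity
    | succ k ih =>
      intro N hN
      rw [pow_succ, mul_assoc, ← Finset.sum_Ico_consecutive h (n := 2 * N) (by lia)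
        (Nat.le_mul_of_pos_left _ (by positivity))]
      calc _ ≤ A * (N : ℝ) ^ (-q) + A / (1 - 2 ^ (-q)) * ((2 * N : ℕ) : ℝ) ^ (-q) :=
            add_le_add (hblock N hN) (ih (2 * N) (by lia))
        _ = A / (1 - 2 ^ (-q)) * (N : ℝ) ^ (-q) := by
            rw [Nat.cast_mul, Nat.cast_two, Real.mul_rpow zero_le_two N.cast_nonneg]
            field_simp
            ring
  have hm : m ≤ 2 ^ m * N :=
    Nat.lt_two_pow_self.le.trans (Nat.le_mul_of_pos_right _ (by lia))
  exact (Finset.sum_le_sum_of_subset_of_nonneg (Finset.Ico_subset_Ico_right hm)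
    fun i _ _ ↦ hh i).trans (hpow m N hN)

end PowerSequences

section NonlinearDescent

theorem rpow_neg_add_mul_le_of_le_sub {a l u v : ℝ} (ha : 0 < a) (hu : 0 < u) (hv : 0 < v)
    (h : v ≤ u - l * u ^ (1 + a)) : u ^ (-a) + a * l ≤ v ^ (-a) := by
  have hfactor : v ≤ u * (1 - l * u ^ a) := by
    rwa [mul_sub, mul_one, mul_left_comm, ← Real.rpow_one_add' hu.le (by positivity)]
  have hlt : 0 < 1 - l * u ^ a := pos_of_mul_pos_right (hv.trans_le hfactor) hu.le
  calc u ^ (-a) + a * l = u ^ (-a) * (1 + a * (l * u ^ a)) := by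
        rw [Real.rpow_neg hu.le]
        field_simp
    _ ≤ u ^ (-a) * (1 - l * u ^ a) ^ (-a) := by
        gcongr
        exact one_add_mul_le_one_sub_rpow_neg (by linarith) ha.le
    _ = (u * (1 - l * u ^ a)) ^ (-a) := (Real.mul_rpow hu.le hlt.le).symm
    _ ≤ v ^ (-a) := Real.rpow_le_rpow_of_nonpos hv hfactor (by linarith)

theorem le_mul_rpow_neg_of_chain {w : ℕ → ℝ} {p l : ℝ} (hp : 0 < p) (hl : 0 < l) {N n : ℕ}
    (hn : 0 < n) (hpos : ∀ i ∈ Finset.Icc N (N + n), 0 < w i)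
    (hstep : ∀ i ∈ Finset.Ico N (N + n), w (i + 1) ≤ w i - l * w i ^ (1 + 1 / p)) :
    w (N + n) ≤ (n * (l / p)) ^ (-p) := by
  simp only [Finset.mem_Icc, Finset.mem_Ico] at hpos hstep
  have hgrowth : ∀ k ≤ n, k * (l / p) ≤ w (N + k) ^ (-(1 / p)) := by
    intro k hk
    induction k with
    | zero =>
      simpa using Real.rpow_nonneg (hpos N (by lia)).le (-(1 / p))
    | succ k ih =>
      calc ((k + 1 : ℕ) : ℝ) * (l / p) = k * (l / p) + 1 / p * l := by push_cast; ring
        _ ≤ w (N + k) ^ (-(1 / p)) + 1 / p * l := by gcongr; exact ih (by lia)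
        _ ≤ w (N + (k + 1)) ^ (-(1 / p)) :=
            rpow_neg_add_mul_le_of_le_sub (by positivity) (hpos _ (by lia)) (hpos _ (by lia))
              (hstep (N + k) (by lia))
  have hw := hpos (N + n) (by lia)
  calc w (N + n) = (w (N + n) ^ (-(1 / p))) ^ (-p) := by
        rw [← Real.rpow_mul hw.le, show -(1 / p) * -p = 1 by field_simp, Real.rpow_one]
    _ ≤ (n * (l / p)) ^ (-p) :=
        Real.rpow_le_rpow_of_nonpos (by positivity) (hgrowth n le_rfl) (by linarith)

theorem two_mul_le_mul_rpow_neg_of_le_or_descent {w : ℕ → ℝ} {p b l : ℝ} (hp : 0 < p) (hl : 0 < l)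
    (hb : 0 ≤ b) {N : ℕ} (hN : 0 < N) (hanti : AntitoneOn w (Set.Ici N))
    (hstep : ∀ j, N ≤ j → 0 < w j →
      w j ≤ b * (j : ℝ) ^ (-p) ∨ w (j + 1) ≤ w j - l * w j ^ (1 + 1 / p)) :
    w (2 * N) ≤ (b + (p / l) ^ p) * (N : ℝ) ^ (-p) := by
  rw [two_mul]
  have hmono {i : ℕ} (hi : N ≤ i) (hiN : i ≤ N + N) : w (N + N) ≤ w i :=
    hanti hi (Nat.le_add_right N N) hiN
  rcases le_or_gt (w (N + N)) 0 with hw | hw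
  · exact hw.trans (by positivity)
  by_cases hsmall : ∃ i ∈ Finset.Ico N (N + N), w i ≤ b * (i : ℝ) ^ (-p)
  · obtain ⟨i, hi, hwi⟩ := hsmall
    rw [Finset.mem_Ico] at hi
    calc w (N + N) ≤ w i := hmono hi.1 hi.2.le
      _ ≤ b * (i : ℝ) ^ (-p) := hwi
      _ ≤ (b + (p / l) ^ p) * (N : ℝ) ^ (-p) := by
          have hpow : (i : ℝ) ^ (-p) ≤ (N : ℝ) ^ (-p) :=
            Real.rpow_le_rpow_of_nonpos (by positivity) (by exact_mod_cast hi.1) (by linarith)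
          gcongr
          exact le_add_of_nonneg_right (by positivity)
  · push Not at hsmall
    have hwpos : ∀ i ∈ Finset.Icc N (N + N), 0 < w i := fun i hi ↦
      hw.trans_le (hmono (Finset.mem_Icc.1 hi).1 (Finset.mem_Icc.1 hi).2)
    calc w (N + N) ≤ (N * (l / p)) ^ (-p) :=
          le_mul_rpow_neg_of_chain hp hl hN hwpos fun i hi ↦
            (hstep i (Finset.mem_Ico.1 hi).1
              (hwpos i (Finset.Ico_subset_Icc_self hi))).resolve_left (hsmall i hi).not_ge
      _ = (p / l) ^ p * (N : ℝ) ^ (-p) := by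
          rw [Real.mul_rpow (by positivity) (by positivity), Real.rpow_neg (x := l / p)
            (by positivity), ← Real.inv_rpow (by positivity), inv_div, mul_comm]
      _ ≤ (b + (p / l) ^ p) * (N : ℝ) ^ (-p) := by gcongr; exact le_add_of_nonneg_left hb

theorem le_mul_rpow_neg_of_le_or_descent {w : ℕ → ℝ} {p b l : ℝ} (hp : 0 < p) (hl : 0 < l)
    (hb : 0 ≤ b) {J : ℕ} (hanti : AntitoneOn w (Set.Ici J))
    (hstep : ∀ j, J ≤ j → 0 < w j →
      w j ≤ b * (j : ℝ) ^ (-p) ∨ w (j + 1) ≤ w j - l * w j ^ (1 + 1 / p))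
    {N : ℕ} (hN : 2 * J ≤ N) (hN₂ : 2 ≤ N) :
    w N ≤ (b + (p / l) ^ p) * 3 ^ p * (N : ℝ) ^ (-p) := by
  obtain ⟨H, hHJ, hH₀, hHN, hNH⟩ : ∃ H, J ≤ H ∧ 0 < H ∧ 2 * H ≤ N ∧ N ≤ 3 * H :=
    ⟨N / 2, by lia, by lia, by lia, by lia⟩
  calc w N ≤ w (2 * H) := hanti (Set.mem_Ici.2 (by lia)) (Set.mem_Ici.2 (by lia)) hHN
    _ ≤ (b + (p / l) ^ p) * (H : ℝ) ^ (-p) :=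
        two_mul_le_mul_rpow_neg_of_le_or_descent hp hl hb hH₀
          (hanti.mono (Set.Ici_subset_Ici.2 hHJ)) fun j hj ↦ hstep j (hHJ.trans hj)
    _ ≤ (b + (p / l) ^ p) * (N / 3 : ℝ) ^ (-p) := by
        gcongr ?_ * ?_
        refine Real.rpow_le_rpow_of_nonpos (by positivity) ?_ (by linarith)
        rw [div_le_iff₀' three_pos]
        exact_mod_cast hNH
    _ = (b + (p / l) ^ p) * 3 ^ p * (N : ℝ) ^ (-p) := by
        rw [Real.div_rpow N.cast_nonneg zero_le_three, Real.rpow_neg zero_le_three]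
        field_simp

theorem sum_Ico_two_mul_le_of_descent {w g : ℕ → ℝ} {c B p : ℝ} (hc : 0 < c) {N : ℕ} (hN : 0 < N)
    (hstep : ∀ i, N ≤ i → c * g i ^ 2 + w (i + 1) ≤ w i) (hpos : 0 ≤ w (2 * N))
    (hle : w N ≤ B * (N : ℝ) ^ (-p)) :
    ∑ i ∈ Finset.Ico N (2 * N), g i ≤ √(B / c) * (N : ℝ) ^ (-((p - 1) / 2)) := by
  have hN₀ : (0 : ℝ) < N := Nat.cast_pos.2 hN
  have henergy : ∑ i ∈ Finset.Ico N (2 * N), g i ^ 2 ≤ B * (N : ℝ) ^ (-p) / c := by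
    rw [le_div_iff₀' hc, Finset.mul_sum]
    linarith [sum_Ico_add_le_of_add_le (by lia : N ≤ 2 * N) hstep]
  have hsq : (∑ i ∈ Finset.Ico N (2 * N), g i) ^ 2 ≤
      B / c * ((N : ℝ) ^ (-((p - 1) / 2))) ^ 2 := by
    calc (∑ i ∈ Finset.Ico N (2 * N), g i) ^ 2
        ≤ N * ∑ i ∈ Finset.Ico N (2 * N), g i ^ 2 := by
          simpa [two_mul] using sq_sum_le_card_mul_sum_sq (s := Finset.Ico N (2 * N)) (f := g)
      _ ≤ N * (B * (N : ℝ) ^ (-p) / c) := by gcongr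
      _ = B / c * ((N : ℝ) ^ (-((p - 1) / 2))) ^ 2 := by
          rw [← Real.rpow_mul_natCast hN₀.le, show -((p - 1) / 2) * (2 : ℕ) = 1 + -p by
            push_cast; ring, Real.rpow_add hN₀, Real.rpow_one]
          ring
  refine (Real.le_sqrt_of_sq_le hsq).trans_eq ?_
  rw [Real.sqrt_mul' _ (sq_nonneg _), Real.sqrt_sq (by positivity)]

end NonlinearDescent

section PerturbedDescent

theorem eventually_descent_add_powerTail {y g : ℕ → ℝ} {a b c : ℝ} (hb : 0 ≤ b) (ha : 0 < a)
    (hstep : ∀ᶠ j : ℕ in atTop,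
      y (j + 1) ≤ y j - c * g j ^ 2 + b * (j : ℝ) ^ (-(a + 1))) :
    ∀ᶠ j : ℕ in atTop, c * g j ^ 2 + (y (j + 1) + powerTail b a (j + 1 : ℕ)) ≤
      y j + powerTail b a j := by
  filter_upwards [hstep, eventually_ge_atTop 1] with j hj hj₁
  have htail := rpow_add_powerTail_add_one_le hb ha (Nat.one_le_cast.2 hj₁ : (1 : ℝ) ≤ j)
  push_cast
  linarith

theorem exists_antitoneOn_Ici_of_descent {w g : ℕ → ℝ} {c : ℝ} (hc : 0 ≤ c)
    (hstep : ∀ᶠ j in atTop, c * g j ^ 2 + w (j + 1) ≤ w j) :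
    ∃ J, 1 ≤ J ∧ AntitoneOn w (Set.Ici J) ∧
      ∀ j, J ≤ j → c * g j ^ 2 + w (j + 1) ≤ w j := by
  obtain ⟨J, hJ⟩ := eventually_atTop.1 (hstep.and (eventually_ge_atTop 1))
  refine ⟨J, (hJ J le_rfl).2, antitoneOn_nat_Ici_of_succ_le fun j hj ↦ ?_, fun j hj ↦ (hJ j hj).1⟩
  linarith [(hJ j hj).1, mul_nonneg hc (sq_nonneg (g j))]

theorem exists_tendsto_of_descent {w g : ℕ → ℝ} {B c : ℝ} (hc : 0 < c) (hg : ∀ j, 0 ≤ g j)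
    (hB : ∀ j, B ≤ w j) (hstep : ∀ᶠ j in atTop, c * g j ^ 2 + w (j + 1) ≤ w j) :
    (∃ l, Tendsto w atTop (𝓝 l)) ∧ Tendsto g atTop (𝓝 0) := by
  obtain ⟨J, -, hanti, -⟩ := exists_antitoneOn_Ici_of_descent hc.le hstep
  obtain ⟨l, hl⟩ : ∃ l, Tendsto w atTop (𝓝 l) := by
    refine ⟨⨅ j, w (j + J), (tendsto_add_atTop_iff_nat J).1 (tendsto_atTop_ciInf ?_ ?_)⟩
    · exact fun i j hij ↦ hanti (Nat.le_add_left J i) (Nat.le_add_left J j) (by gcongr)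
    · exact ⟨B, Set.forall_mem_range.2 fun j ↦ hB (j + J)⟩
  refine ⟨⟨l, hl⟩, ?_⟩
  have hdrop : Tendsto (fun j ↦ (w j - w (j + 1)) / c) atTop (𝓝 0) := by
    simpa using (hl.sub (hl.comp (tendsto_add_atTop_nat 1))).div_const c
  have hsq : Tendsto (fun j ↦ g j ^ 2) atTop (𝓝 0) := by
    refine squeeze_zero' (Eventually.of_forall fun j ↦ sq_nonneg _) ?_ hdrop
    filter_upwards [hstep] with j hj
    rw [le_div_iff₀' hc]
    linarith
  simpa only [Real.sqrt_zero, Real.sqrt_sq (hg _)] using hsq.sqrt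

theorem eventually_le_mul_rpow_neg_of_perturbed_descent {y g : ℕ → ℝ} {a c K p : ℝ}
    (hc : 0 ≤ c) (hK : 0 ≤ K) (hp : 0 < p) (hpa : p ≤ a)
    (hstep : ∀ᶠ j : ℕ in atTop,
      y (j + 1) ≤ y j - c * g j ^ 2 + K * (j : ℝ) ^ (-(a + 1)))
    (hsuper : ∀ᶠ j in atTop, 0 < y j → (2 * y j) ^ (1 + 1 / p) ≤ c * g j ^ 2) :
    ∀ᶠ N : ℕ in atTop, y N + powerTail K a N ≤
      (2 * powerTail K a 1 + p ^ p) * 3 ^ p * (N : ℝ) ^ (-p) := by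
  have ha : 0 < a := hp.trans_le hpa
  obtain ⟨J, hJ, hanti, hw⟩ := exists_antitoneOn_Ici_of_descent (g := g)
    (w := fun j ↦ y j + powerTail K a j) hc (eventually_descent_add_powerTail hK ha hstep)
  obtain ⟨J', hJ'⟩ := eventually_atTop.1 hsuper
  have htail {j : ℕ} (hj : 1 ≤ j) : powerTail K a j ≤ powerTail K a 1 * (j : ℝ) ^ (-p) := by
    unfold powerTail
    rw [Real.one_rpow, mul_one]
    gcongr
    exact_mod_cast hj
  filter_upwards [eventually_ge_atTop (2 * max J J'), eventually_ge_atTop 2] with N hN hN₂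
  have hdecay := le_mul_rpow_neg_of_le_or_descent hp one_pos (b := 2 * powerTail K a 1)
    (mul_nonneg zero_le_two (powerTail_nonneg hK ha.le zero_le_one))
    (hanti.mono (Set.Ici_subset_Ici.2 (le_max_left J J'))) (fun j hj hwj ↦ ?_) hN hN₂
  · simpa only [div_one] using hdecay
  have hT := powerTail_nonneg hK ha.le (Nat.cast_nonneg (α := ℝ) j)
  rcases le_or_gt (y j) (powerTail K a j) with hy | hy
  · left
    linarith [htail (j := j) (by lia)]
  · right
    have hpow : (y j + powerTail K a j) ^ (1 + 1 / p) ≤ (2 * y j) ^ (1 + 1 / p) := by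
      gcongr
      linarith
    linarith [hJ' j (by lia) (hT.trans_lt hy), hw j (by lia)]

theorem exists_sum_Ico_le_of_perturbed_descent {a c K p : ℝ} (hc : 0 < c) (hK : 0 ≤ K)
    (hp : 1 < p) (hpa : p ≤ a) :
    ∃ C, 0 < C ∧ ∀ y g : ℕ → ℝ, (∀ j, 0 ≤ g j) → Tendsto y atTop (𝓝 0) →
      (∀ᶠ j : ℕ in atTop, y (j + 1) ≤ y j - c * g j ^ 2 + K * (j : ℝ) ^ (-(a + 1))) →
      (∀ᶠ j in atTop, 0 < y j → (2 * y j) ^ (1 + 1 / p) ≤ c * g j ^ 2) →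
      ∀ᶠ N : ℕ in atTop, ∀ m,
        ∑ i ∈ Finset.Ico N m, g i ≤ C * (N : ℝ) ^ (-((p - 1) / 2)) := by
  have hp₀ : 0 < p := by linarith
  have hq : 0 < (p - 1) / 2 := by linarith
  have ha : 0 < a := by linarith
  set B := (2 * powerTail K a 1 + p ^ p) * 3 ^ p
  have hB : 0 < B := by
    have := powerTail_nonneg hK ha.le zero_le_one
    positivity
  have hgeom : 0 < 1 - (2 : ℝ) ^ (-((p - 1) / 2)) :=
    sub_pos.2 (Real.rpow_lt_one_of_one_lt_of_neg one_lt_two (neg_lt_zero.2 hq))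
  refine ⟨√(B / c) / (1 - 2 ^ (-((p - 1) / 2))), by positivity,
    fun y g hg hy hstep hsuper ↦ ?_⟩
  have hbound := eventually_le_mul_rpow_neg_of_perturbed_descent hc.le hK hp₀ hpa hstep hsuper
  obtain ⟨J, hJ, hanti, hw⟩ := exists_antitoneOn_Ici_of_descent (g := g)
    (w := fun j ↦ y j + powerTail K a j) hc.le (eventually_descent_add_powerTail hK ha hstep)
  have hlim : Tendsto (fun j : ℕ ↦ y j + powerTail K a j) atTop (𝓝 0) := by
    simpa using hy.add (tendsto_powerTail K ha)
  have hnonneg {j : ℕ} (hj : J ≤ j) : 0 ≤ y j + powerTail K a j :=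
    le_of_tendsto hlim <| (eventually_ge_atTop j).mono fun m hm ↦
      hanti (Set.mem_Ici.2 hj) (Set.mem_Ici.2 (hj.trans hm)) hm
  obtain ⟨J', hJ'⟩ := eventually_atTop.1 hbound
  filter_upwards [eventually_ge_atTop (max J J')] with N hN m
  refine sum_Ico_le_of_dyadic_blocks hg hq (by positivity) (le_max_of_le_left hJ)
    (fun N hN ↦ ?_) hN m
  exact sum_Ico_two_mul_le_of_descent (w := fun j ↦ y j + powerTail K a j) hc (by lia)
    (fun i hi ↦ hw i (by lia)) (hnonneg (by lia)) (hJ' N (by lia))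

theorem exists_sum_Ico_le_mul_of_perturbed_descent {c K r ρ : ℝ} (hc : 0 < c) (hK : 0 ≤ K)
    (hρ : 1 < ρ) (hρr : ρ ≤ r) :
    ∃ C κ, 0 < C ∧ 0 < κ ∧ ∀ s : ℝ, 0 < s → ∀ y g : ℕ → ℝ, (∀ j, 0 ≤ g j) →
      Tendsto y atTop (𝓝 0) →
      (∀ᶠ j : ℕ in atTop, y (j + 1) ≤ y j - c * g j ^ 2 + K * s ^ 2 * (j : ℝ) ^ (-(2 * r))) →
      (∀ᶠ j in atTop, 0 < y j →
        y j ^ (1 + 1 / (2 * ρ - 1)) ≤ κ * s ^ (2 / (2 * ρ - 1)) * g j ^ 2) →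
      ∀ᶠ N : ℕ in atTop, ∀ m,
        ∑ i ∈ Finset.Ico N m, g i ≤ C * s * (N : ℝ) ^ (-(ρ - 1)) := by
  set p := 2 * ρ - 1 with hp
  obtain ⟨C, hC, hrate⟩ := exists_sum_Ico_le_of_perturbed_descent (a := 2 * r - 1) (p := p) hc hK
    (by linarith) (by linarith)
  refine ⟨C, c / 2 ^ (1 + 1 / p), hC, by positivity, fun s hs y g hg hy hstep hsuper ↦ ?_⟩
  have hscaled := hrate (fun j ↦ y j / s ^ 2) (fun j ↦ g j / s)
    (fun j ↦ div_nonneg (hg j) hs.le) (by simpa using hy.div_const (s ^ 2)) ?_ ?_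
  · filter_upwards [hscaled] with N hN m
    have h := hN m
    rw [← Finset.sum_div, div_le_iff₀ hs, show (p - 1) / 2 = ρ - 1 by rw [hp]; ring] at h
    linarith
  · filter_upwards [hstep] with j hj
    rw [sub_add_cancel]
    calc y (j + 1) / s ^ 2
        ≤ (y j - c * g j ^ 2 + K * s ^ 2 * (j : ℝ) ^ (-(2 * r))) / s ^ 2 := by gcongr
      _ = y j / s ^ 2 - c * (g j / s) ^ 2 + K * (j : ℝ) ^ (-(2 * r)) := by field_simp
  · filter_upwards [hsuper] with j hj hyj
    have hyj : 0 < y j := by rwa [div_pos_iff_of_pos_right (by positivity)] at hyj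
    have hs₂ : (s ^ 2) ^ (1 + 1 / p) = s ^ 2 * s ^ (2 / p) := by
      rw [← Real.rpow_natCast, ← Real.rpow_mul hs.le, ← Real.rpow_add hs]
      congr 1
      push_cast
      ring
    calc (2 * (y j / s ^ 2)) ^ (1 + 1 / p)
        = 2 ^ (1 + 1 / p) * (y j ^ (1 + 1 / p) / (s ^ 2 * s ^ (2 / p))) := by
          rw [Real.mul_rpow zero_le_two (by positivity), Real.div_rpow hyj.le (by positivity), hs₂]
      _ ≤ 2 ^ (1 + 1 / p) * (c / 2 ^ (1 + 1 / p) * s ^ (2 / p) * g j ^ 2 /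
            (s ^ 2 * s ^ (2 / p))) := by
          gcongr
          exact hj hyj
      _ = c * (g j / s) ^ 2 := by field_simp

end PerturbedDescent

section StepClock

variable {E : Type*} [NormedAddCommGroup E] [NormedSpace ℝ E]

theorem norm_sum_Ico_smul_le_of_antitoneOn {b : ℕ → ℝ} {y : ℕ → E} {n m : ℕ} {s : ℝ}
    (hnm : n ≤ m) (hb : AntitoneOn b (Set.Ici n)) (hb₀ : 0 ≤ b m)
    (hs : ∀ k, n ≤ k → k ≤ m → ‖∑ i ∈ Finset.Ico n k, y i‖ ≤ s) :
    ‖∑ i ∈ Finset.Ico n m, b i • y i‖ ≤ b n * s := by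
  have habel : ‖∑ i ∈ Finset.Ico n m, b i • y i - b m • ∑ i ∈ Finset.Ico n m, y i‖ ≤
      (b n - b m) * s := by
    clear hb₀
    induction m, hnm using Nat.le_induction with
    | base => simp
    | succ m hnm ih =>
      have hdrop : 0 ≤ b m - b (m + 1) :=
        sub_nonneg.2 (hb hnm (Set.mem_Ici.2 (by lia)) m.le_succ)
      have hsplit : ∑ i ∈ Finset.Ico n (m + 1), b i • y i -
          b (m + 1) • ∑ i ∈ Finset.Ico n (m + 1), y i =
          (∑ i ∈ Finset.Ico n m, b i • y i - b m • ∑ i ∈ Finset.Ico n m, y i) +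
            (b m - b (m + 1)) • ∑ i ∈ Finset.Ico n (m + 1), y i := by
        rw [Finset.sum_Ico_succ_top hnm, Finset.sum_Ico_succ_top hnm]
        module
      calc _ ≤ (b n - b m) * s + (b m - b (m + 1)) * s := by
            rw [hsplit]
            refine norm_add_le_of_le (ih fun k hk hkm ↦ hs k hk (by lia)) ?_
            rw [norm_smul, Real.norm_of_nonneg hdrop]
            exact mul_le_mul_of_nonneg_left (hs _ (by lia) le_rfl) hdrop
        _ = (b n - b (m + 1)) * s := by ring
  have hlast : ‖b m • ∑ i ∈ Finset.Ico n m, y i‖ ≤ b m * s := by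
    rw [norm_smul, Real.norm_of_nonneg hb₀]
    exact mul_le_mul_of_nonneg_left (hs m hnm le_rfl) hb₀
  calc _ = ‖(∑ i ∈ Finset.Ico n m, b i • y i - b m • ∑ i ∈ Finset.Ico n m, y i) +
        b m • ∑ i ∈ Finset.Ico n m, y i‖ := by rw [sub_add_cancel]
    _ ≤ (b n - b m) * s + b m * s := norm_add_le_of_le habel hlast
    _ = b n * s := by ring

/-- Step sizes `α` satisfying Assumption 1.1, together with the algorithmic time
`γ n = ∑_{i < n} α i` that they generate. -/
structure IsStepClock (α γ : ℕ → ℝ) : Prop where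
  step_pos : ∀ n, 0 < α n
  time_eq : ∀ n, γ n = ∑ i ∈ Finset.range n, α i
  tendsto_step : Tendsto α atTop (𝓝 0)
  tendsto_time : Tendsto γ atTop atTop

/-- The index `a(n, 1)` of the last iterate within one unit of algorithmic time after `n`. -/
noncomputable def windowEnd (γ : ℕ → ℝ) (n : ℕ) : ℕ :=
  sSup {k | n ≤ k ∧ γ k - γ n ≤ 1}

/-- The quantity whose upper limit is the noise level `ξ` of Assumption 1.2. The supremum is over a
real-valued family indexed by propositions, so indices outside the window contribute `0`. -/
noncomputable def weightedNoise (α γ : ℕ → ℝ) (r : ℝ) (z : ℕ → E) (n : ℕ) : ℝ :=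
  ⨆ k ∈ Set.Ico n (windowEnd γ n), ‖∑ i ∈ Finset.Icc n k, (α i * γ i ^ r) • z i‖

/-- Over algorithmic time at most `1`, the accumulated noise `∑ α i • z i` started at a large index
`n` stays below `s * γ n ^ (-r)`. -/
def NoiseBound (α γ : ℕ → ℝ) (z : ℕ → E) (r s : ℝ) : Prop :=
  ∀ᶠ n in atTop, ∀ k, n ≤ k → γ k - γ n ≤ 1 →
    ‖∑ i ∈ Finset.Ico n k, α i • z i‖ ≤ s * γ n ^ (-r)

namespace IsStepClock

variable {α γ : ℕ → ℝ}

theorem time_zero (h : IsStepClock α γ) : γ 0 = 0 := by simp [h.time_eq]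

theorem time_succ (h : IsStepClock α γ) (n : ℕ) : γ (n + 1) = γ n + α n := by
  simp [h.time_eq, Finset.sum_range_succ]

theorem sum_Ico_step (h : IsStepClock α γ) {n m : ℕ} (hnm : n ≤ m) :
    ∑ i ∈ Finset.Ico n m, α i = γ m - γ n := by
  rw [Finset.sum_Ico_eq_sub _ hnm, h.time_eq, h.time_eq]

theorem monotone_time (h : IsStepClock α γ) : Monotone γ :=
  monotone_nat_of_le_succ fun n ↦ by linarith [h.time_succ n, h.step_pos n]

theorem time_nonneg (h : IsStepClock α γ) (n : ℕ) : 0 ≤ γ n :=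
  h.time_zero ▸ h.monotone_time n.zero_le

theorem le_windowEnd (h : IsStepClock α γ) {n k : ℕ} (hnk : n ≤ k) (hk : γ k - γ n ≤ 1) :
    k ≤ windowEnd γ n := by
  refine le_csSup ?_ ⟨hnk, hk⟩
  obtain ⟨N, hN⟩ := (h.tendsto_time.eventually_gt_atTop (γ n + 1)).exists
  refine ⟨N, fun j hj ↦ le_of_not_ge fun hNj ↦ ?_⟩
  linarith [h.monotone_time hNj, hj.2]

end IsStepClock

theorem norm_sum_Icc_le_weightedNoise (α γ : ℕ → ℝ) (r : ℝ) (z : ℕ → E) {n k : ℕ}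
    (hk : k ∈ Set.Ico n (windowEnd γ n)) :
    ‖∑ i ∈ Finset.Icc n k, (α i * γ i ^ r) • z i‖ ≤ weightedNoise α γ r z n := by
  set F : ℕ → ℝ := fun k ↦ ‖∑ i ∈ Finset.Icc n k, (α i * γ i ^ r) • z i‖
  have hbdd : BddAbove (Set.range fun k ↦ ⨆ _ : k ∈ Set.Ico n (windowEnd γ n), F k) := by
    refine ⟨∑ k ∈ Finset.Ico n (windowEnd γ n), F k, Set.forall_mem_range.2 fun j ↦ ?_⟩
    exact Real.iSup_le
      (fun hj ↦ Finset.single_le_sum (f := F) (fun i _ ↦ norm_nonneg _) (Finset.mem_Ico.2 hj))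
      (Finset.sum_nonneg fun i _ ↦ norm_nonneg _)
  calc F k = ⨆ _ : k ∈ Set.Ico n (windowEnd γ n), F k := (ciSup_pos (f := fun _ ↦ F k) hk).symm
    _ ≤ weightedNoise α γ r z n := le_ciSup hbdd k

theorem weightedNoise_nonneg (α γ : ℕ → ℝ) (r : ℝ) (z : ℕ → E) (n : ℕ) :
    0 ≤ weightedNoise α γ r z n :=
  Real.iSup_nonneg fun _ ↦ Real.iSup_nonneg fun _ ↦ norm_nonneg _

theorem IsStepClock.noiseBound {α γ : ℕ → ℝ} (h : IsStepClock α γ) {z : ℕ → E} {r s : ℝ}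
    (hr : 0 ≤ r) (hs : ∀ᶠ n in atTop, weightedNoise α γ r z n ≤ s) : NoiseBound α γ z r s := by
  filter_upwards [hs, h.tendsto_time.eventually_gt_atTop 0] with n hn hγn k hnk hk
  have hγ {i : ℕ} (hi : n ≤ i) : 0 < γ i := hγn.trans_le (h.monotone_time hi)
  have hpartial (j : ℕ) (hnj : n ≤ j) (hjk : j ≤ k) :
      ‖∑ i ∈ Finset.Ico n j, (α i * γ i ^ r) • z i‖ ≤ s := by
    obtain rfl | hlt := hnj.eq_or_lt
    · simpa using (weightedNoise_nonneg α γ r z n).trans hn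
    · obtain ⟨j, rfl⟩ := Nat.exists_eq_add_one_of_ne_zero (by lia : j ≠ 0)
      rw [Finset.Ico_add_one_right_eq_Icc]
      exact (norm_sum_Icc_le_weightedNoise α γ r z
        ⟨by lia, hjk.trans (h.le_windowEnd hnk hk)⟩).trans hn
  have hunweight : ∑ i ∈ Finset.Ico n k, α i • z i =
      ∑ i ∈ Finset.Ico n k, γ i ^ (-r) • (α i * γ i ^ r) • z i := by
    refine Finset.sum_congr rfl fun i hi ↦ ?_
    have := hγ (Finset.mem_Ico.1 hi).1
    rw [smul_smul, Real.rpow_neg this.le]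
    congr 1
    field_simp
  rw [hunweight, mul_comm]
  refine norm_sum_Ico_smul_le_of_antitoneOn hnk (fun i hi j _ hij ↦ ?_)
    (Real.rpow_nonneg (hγ hnk).le _) hpartial
  exact Real.rpow_le_rpow_of_nonpos (hγ hi) (h.monotone_time hij) (neg_nonpos.2 hr)

end StepClock

section Blocks

theorem IsStepClock.exists_time_mem_Icc {α γ : ℕ → ℝ} (h : IsStepClock α γ) {n : ℕ} {δ t : ℝ}
    (hδ : ∀ i, n ≤ i → α i ≤ δ) (ht : γ n ≤ t) : ∃ k, γ k ∈ Set.Icc t (t + δ) := by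
  obtain rfl | ht := ht.eq_or_lt
  · exact ⟨n, le_rfl, le_add_of_nonneg_right ((h.step_pos n).le.trans (hδ n le_rfl))⟩
  have hex : ∃ k, t ≤ γ k := (h.tendsto_time.eventually_ge_atTop t).exists
  classical
  obtain ⟨k, hk⟩ : ∃ k, Nat.find hex = k + 1 := by
    refine Nat.exists_eq_add_one_of_ne_zero fun h₀ ↦ ht.not_ge ?_
    exact (Nat.find_spec hex).trans (h.monotone_time (h₀ ▸ n.zero_le))
  have hbefore : γ k < t := not_le.1 (Nat.find_min hex (hk ▸ k.lt_succ_self))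
  have hafter : t ≤ γ (k + 1) := hk ▸ Nat.find_spec hex
  have hnk : n ≤ k := not_lt.1 fun hkn ↦ ht.not_ge (hafter.trans (h.monotone_time hkn))
  exact ⟨k + 1, hafter, by linarith [h.time_succ k, hδ k hnk]⟩

/-- `φ` cuts the indices into blocks whose duration in algorithmic time is comparable to `T`. -/
structure IsBlockPartition (γ : ℕ → ℝ) (T : ℝ) (φ : ℕ → ℕ) : Prop where
  strictMono : StrictMono φ
  duration_mem : ∀ j, γ (φ (j + 1)) - γ (φ j) ∈ Set.Icc (T / 2) T
  mul_le_time : ∀ j : ℕ, T / 2 * j ≤ γ (φ j)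

theorem IsStepClock.exists_isBlockPartition {α γ : ℕ → ℝ} (h : IsStepClock α γ) {T : ℝ}
    (hT : 0 < T) : ∃ φ, IsBlockPartition γ T φ := by
  obtain ⟨n, hn⟩ :=
    eventually_atTop.1 (h.tendsto_step.eventually_le_const (by positivity : 0 < T / 4))
  have hγn := h.time_nonneg n
  have hex (j : ℕ) : ∃ k, γ k ∈ Set.Icc (γ n + 3 / 4 * T * j) (γ n + 3 / 4 * T * j + T / 4) :=
    h.exists_time_mem_Icc hn (le_add_of_nonneg_right (by positivity))
  choose φ hφ using hex
  have hduration (j : ℕ) : γ (φ (j + 1)) - γ (φ j) ∈ Set.Icc (T / 2) T := by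
    have hj := hφ j
    have hj₁ := hφ (j + 1)
    push_cast [Set.mem_Icc] at hj hj₁ ⊢
    constructor <;> linarith
  refine ⟨φ, strictMono_nat_of_lt_succ fun j ↦ ?_, hduration, fun j ↦ ?_⟩
  · refine h.monotone_time.reflect_lt ?_
    linarith [(hduration j).1]
  · linarith [(hφ j).1, show 0 ≤ T * j by positivity]

theorem IsBlockPartition.exists_time_le {γ : ℕ → ℝ} {T : ℝ} {φ : ℕ → ℕ}
    (h : IsBlockPartition γ T φ) :
    ∃ t, 0 < t ∧ ∀ j : ℕ, 1 ≤ j → γ (φ (j + 1)) ≤ t * j := by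
  have hT : 0 ≤ T := by linarith [(h.duration_mem 0).1.trans (h.duration_mem 0).2]
  have hγ₀ : 0 ≤ γ (φ 0) := by simpa using h.mul_le_time 0
  have hlinear (j : ℕ) : γ (φ j) ≤ γ (φ 0) + T * j := by
    induction j with
    | zero => simp
    | succ j ih => push_cast; linarith [(h.duration_mem j).2]
  refine ⟨γ (φ 0) + 2 * T + 1, by positivity, fun j hj ↦ (hlinear (j + 1)).trans ?_⟩
  have hj : (1 : ℝ) ≤ j := by exact_mod_cast hj
  push_cast
  nlinarith

theorem exists_blockIndex {φ : ℕ → ℕ} (hφ : StrictMono φ) :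
    ∃ ι : ℕ → ℕ, Tendsto ι atTop atTop ∧ ∀ᶠ n in atTop, φ (ι n) ≤ n ∧ n < φ (ι n + 1) := by
  refine ⟨fun n ↦ Nat.findGreatest (φ · ≤ n) n, tendsto_atTop.2 fun j ↦ ?_, ?_⟩
  · filter_upwards [eventually_ge_atTop (φ j)] with n hn
    exact Nat.le_findGreatest (hφ.le_apply.trans hn) hn
  · filter_upwards [eventually_ge_atTop (φ 0)] with n hn
    refine ⟨Nat.findGreatest_spec (P := (φ · ≤ n)) n.zero_le hn, not_le.1 fun hle ↦ ?_⟩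
    exact (Nat.le_findGreatest (P := (φ · ≤ n)) (hφ.le_apply.trans hle) hle).not_gt
      (Nat.lt_succ_self _)

theorem tendsto_of_tendsto_blocks {X : Type*} [PseudoMetricSpace X] {u : ℕ → X} {l : X}
    {φ : ℕ → ℕ} {d : ℕ → ℝ} (hφ : StrictMono φ) (hu : Tendsto (u ∘ φ) atTop (𝓝 l))
    (hd : Tendsto d atTop (𝓝 0))
    (hblock : ∀ᶠ j in atTop, ∀ k, φ j ≤ k → k ≤ φ (j + 1) → dist (u k) (u (φ j)) ≤ d j) :
    Tendsto u atTop (𝓝 l) := by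
  obtain ⟨ι, hι, hmem⟩ := exists_blockIndex hφ
  have hbase : Tendsto (fun n ↦ u (φ (ι n))) atTop (𝓝 l) := hu.comp hι
  refine hbase.congr_dist (squeeze_zero' (Eventually.of_forall fun n ↦ dist_nonneg) ?_ (hd.comp hι))
  filter_upwards [hι.eventually hblock, hmem] with n hn hmem
  rw [dist_comm]
  exact hn n hmem.1 hmem.2.le

theorem dist_le_two_mul_sum_blocks {X : Type*} [PseudoMetricSpace X] {u : ℕ → X} {φ : ℕ → ℕ}
    {d : ℕ → ℝ} {i j k n : ℕ} (hφ : StrictMono φ)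
    (hblock : ∀ m, j ≤ m → ∀ k, φ m ≤ k → k ≤ φ (m + 1) → dist (u k) (u (φ m)) ≤ d m)
    (hj : φ j ≤ n ∧ n < φ (j + 1)) (hi : φ i ≤ k ∧ k < φ (i + 1)) (hji : j ≤ i) :
    dist (u k) (u n) ≤ 2 * ∑ m ∈ Finset.Ico j (i + 1), d m := by
  have hlen (m : ℕ) : φ m ≤ φ (m + 1) := hφ.monotone m.le_succ
  have hd : ∀ m ∈ Finset.Ico j (i + 1), 0 ≤ d m := fun m hm ↦
    dist_nonneg.trans (hblock m (Finset.mem_Ico.1 hm).1 (φ m) le_rfl (hlen m))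
  have hchain : dist (u (φ j)) (u (φ i)) ≤ ∑ m ∈ Finset.Ico j i, d m := by
    refine dist_le_Ico_sum_of_dist_le (f := u ∘ φ) hji fun {m} hm _ ↦ ?_
    rw [Function.comp_apply, Function.comp_apply, dist_comm]
    exact hblock m hm _ (hlen m) le_rfl
  have hfirst : dist (u (φ j)) (u n) ≤ ∑ m ∈ Finset.Ico j (i + 1), d m := by
    rw [dist_comm]
    exact (hblock j le_rfl n hj.1 hj.2.le).trans
      (Finset.single_le_sum hd (Finset.mem_Ico.2 ⟨le_rfl, by lia⟩))
  have hlast : dist (u k) (u (φ i)) ≤ d i := hblock i hji k hi.1 hi.2.le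
  rw [Finset.sum_Ico_succ_top hji] at hfirst ⊢
  linarith [dist_triangle4 (u k) (u (φ i)) (u (φ j)) (u n), dist_comm (u (φ i)) (u (φ j))]

theorem eventually_rpow_mul_dist_le_of_blocks {X : Type*} [PseudoMetricSpace X] {u : ℕ → X}
    {γ d : ℕ → ℝ} {φ : ℕ → ℕ} {A q t : ℝ} (hφ : StrictMono φ) (hγ : Monotone γ)
    (hγ₀ : ∀ n, 0 ≤ γ n) (ht : 0 ≤ t) (hγφ : ∀ j : ℕ, 1 ≤ j → γ (φ (j + 1)) ≤ t * j) (hq : 0 ≤ q)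
    (hblock : ∀ᶠ j in atTop, ∀ k, φ j ≤ k → k ≤ φ (j + 1) → dist (u k) (u (φ j)) ≤ d j)
    (hsum : ∀ᶠ N : ℕ in atTop, ∀ m, ∑ j ∈ Finset.Ico N m, d j ≤ A * (N : ℝ) ^ (-q)) :
    ∀ᶠ n in atTop, ∀ k, n ≤ k → γ n ^ q * dist (u k) (u n) ≤ 2 * t ^ q * A := by
  obtain ⟨ι, hι, hmem⟩ := exists_blockIndex hφ
  obtain ⟨J, hJ⟩ := eventually_atTop.1 hblock
  filter_upwards [hι.eventually (hsum.and ((eventually_ge_atTop J).and (eventually_ge_atTop 1))),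
    eventually_forall_ge_atTop.2 hmem] with n ⟨hsum, hJn, hn₁⟩ hmem k hnk
  have hn := hmem n le_rfl
  have hk := hmem k hnk
  have hindex : ι n ≤ ι k :=
    Nat.lt_succ_iff.1 (hφ.lt_iff_lt.1 (hn.1.trans_lt (hnk.trans_lt hk.2)))
  have hdist := dist_le_two_mul_sum_blocks hφ (fun m hm ↦ hJ m (hJn.trans hm)) hn hk hindex
  have htime : γ n ^ q ≤ t ^ q * (ι n : ℝ) ^ q := by
    rw [← Real.mul_rpow ht (Nat.cast_nonneg _)]
    exact Real.rpow_le_rpow (hγ₀ n) ((hγ hn.2.le).trans (hγφ _ hn₁)) hq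
  have hcancel : (ι n : ℝ) ^ q * (ι n : ℝ) ^ (-q) = 1 := by
    rw [← Real.rpow_add (by exact_mod_cast hn₁), add_neg_cancel, Real.rpow_zero]
  calc γ n ^ q * dist (u k) (u n)
      ≤ t ^ q * (ι n : ℝ) ^ q * (2 * (A * (ι n : ℝ) ^ (-q))) := by
        gcongr
        linarith [hsum (ι k + 1)]
    _ = 2 * t ^ q * A * ((ι n : ℝ) ^ q * (ι n : ℝ) ^ (-q)) := by ring
    _ = 2 * t ^ q * A := by rw [hcancel, mul_one]

end Blocks

section GradientBlock

variable {E : Type*} [NormedAddCommGroup E] [InnerProductSpace ℝ E] [CompleteSpace E] {f : E → ℝ}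
  {S : Set E} {K : ℝ≥0} {α γ : ℕ → ℝ} {x z : ℕ → E}

theorem abs_sub_sub_inner_gradient_le (hf : Differentiable ℝ f) (hS : Convex ℝ S)
    (hK : LipschitzOnWith K (∇ f) S) {a b : E} (ha : a ∈ S) (hb : b ∈ S) :
    |f b - f a - inner ℝ (∇ f a) (b - a)| ≤ K * ‖b - a‖ ^ 2 := by
  have h := (convex_segment a b).norm_image_sub_le_of_norm_hasFDerivWithin_le' (𝕜 := ℝ) (f := f)
    (f' := fun c ↦ InnerProductSpace.toDual ℝ E (∇ f c)) (φ := InnerProductSpace.toDual ℝ E (∇ f a))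
    (C := K * ‖b - a‖) (fun c _ ↦ (hf c).hasGradientAt.hasFDerivAt.hasFDerivWithinAt)
    (fun c hc ↦ ?_) (left_mem_segment ℝ a b) (right_mem_segment ℝ a b)
  · rw [InnerProductSpace.toDual_apply_apply, Real.norm_eq_abs] at h
    exact h.trans_eq (by ring)
  · rw [← map_sub, LinearIsometryEquiv.norm_map]
    refine (hK.norm_sub_le (hS.segment_subset ha hb hc) ha).trans ?_
    gcongr
    exact norm_sub_le_of_mem_segment hc

theorem abs_sub_le_norm_gradient_mul_add (hf : Differentiable ℝ f) (hS : Convex ℝ S)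
    (hK : LipschitzOnWith K (∇ f) S) {a b : E} (ha : a ∈ S) (hb : b ∈ S) :
    |f b - f a| ≤ ‖∇ f a‖ * ‖b - a‖ + K * ‖b - a‖ ^ 2 := by
  linarith [abs_sub_sub_inner_gradient_le hf hS hK ha hb,
    abs_sub_abs_le_abs_sub (f b - f a) (inner ℝ (∇ f a) (b - a)),
    abs_real_inner_le_norm (∇ f a) (b - a)]

theorem sub_eq_of_gradient_step (hγ : IsStepClock α γ)
    (hrec : ∀ n, x (n + 1) = x n - α n • (∇ f (x n) + z n)) {n k : ℕ} (hnk : n ≤ k) :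
    x k - x n = -((γ k - γ n) • ∇ f (x n)) -
      ∑ i ∈ Finset.Ico n k, α i • (∇ f (x i) - ∇ f (x n)) - ∑ i ∈ Finset.Ico n k, α i • z i := by
  induction k, hnk using Nat.le_induction with
  | base => simp
  | succ k hnk ih =>
    rw [Finset.sum_Ico_succ_top hnk, Finset.sum_Ico_succ_top hnk, hrec, hγ.time_succ,
      sub_right_comm, ih]
    module

theorem norm_sum_gradient_sub_le (hγ : IsStepClock α γ) (hK : LipschitzOnWith K (∇ f) S)
    (hx : ∀ n, x n ∈ S) {n k : ℕ} (hnk : n ≤ k) {D T : ℝ} (hT : γ k - γ n ≤ T) (hD₀ : 0 ≤ D)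
    (hD : ∀ i, n ≤ i → i < k → ‖x i - x n‖ ≤ D) :
    ‖∑ i ∈ Finset.Ico n k, α i • (∇ f (x i) - ∇ f (x n))‖ ≤ T * K * D := by
  calc ‖∑ i ∈ Finset.Ico n k, α i • (∇ f (x i) - ∇ f (x n))‖
      ≤ ∑ i ∈ Finset.Ico n k, α i * (K * D) := by
        refine norm_sum_le_of_le _ fun i hi ↦ ?_
        rw [norm_smul, Real.norm_of_nonneg (hγ.step_pos i).le]
        refine mul_le_mul_of_nonneg_left ((hK.norm_sub_le (hx i) (hx n)).trans ?_)
          (hγ.step_pos i).le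
        gcongr
        exact hD i (Finset.mem_Ico.1 hi).1 (Finset.mem_Ico.1 hi).2
    _ = (γ k - γ n) * (K * D) := by rw [← Finset.sum_mul, hγ.sum_Ico_step hnk]
    _ ≤ T * (K * D) := by gcongr
    _ = T * K * D := by ring

theorem norm_sub_le_of_gradient_block (hγ : IsStepClock α γ) (hK : LipschitzOnWith K (∇ f) S)
    (hx : ∀ n, x n ∈ S) (hrec : ∀ n, x (n + 1) = x n - α n • (∇ f (x n) + z n)) {T η : ℝ}
    (hT : 0 ≤ T) (hη : 0 ≤ η) (hTK : T * K ≤ 1 / 2) {n m : ℕ} (hnm : γ m - γ n ≤ T)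
    (hz : ∀ k, n ≤ k → k ≤ m → ‖∑ i ∈ Finset.Ico n k, α i • z i‖ ≤ η) :
    ∀ k, n ≤ k → k ≤ m → ‖x k - x n‖ ≤ 2 * (T * ‖∇ f (x n)‖ + η) := by
  intro k
  induction k using Nat.strong_induction_on with
  | _ k ih =>
    intro hnk hkm
    set D := 2 * (T * ‖∇ f (x n)‖ + η) with hD
    have hduration : γ k - γ n ≤ T := by linarith [hγ.monotone_time hkm]
    have hdrift : ‖(γ k - γ n) • ∇ f (x n)‖ ≤ T * ‖∇ f (x n)‖ := by
      rw [norm_smul, Real.norm_of_nonneg (sub_nonneg.2 (hγ.monotone_time hnk))]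
      gcongr
    have hcurvature := norm_sum_gradient_sub_le hγ hK hx hnk hduration
      (by positivity : 0 ≤ D) fun i hni hik ↦ ih i hik hni (hik.le.trans hkm)
    rw [sub_eq_of_gradient_step hγ hrec hnk]
    calc _ ≤ T * ‖∇ f (x n)‖ + T * K * D + η :=
          norm_sub_le_of_le (norm_sub_le_of_le ((norm_neg _).trans_le hdrift) hcurvature)
            (hz k hnk hkm)
      _ ≤ T * ‖∇ f (x n)‖ + 1 / 2 * D + η := by gcongr
      _ = D := by rw [hD]; ring

theorem block_error_le {L T g η : ℝ} (hT : 0 < T) (hg : 0 ≤ g) (hη : 0 ≤ η) (hTL : T * L ≤ 1 / 32) :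
    g * (T * L * (2 * (T * g + η)) + η) + L * (2 * (T * g + η)) ^ 2 ≤
      3 / 8 * T * g ^ 2 + 5 / T * η ^ 2 := by
  refine le_of_mul_le_mul_left ?_ hT
  calc T * (g * (T * L * (2 * (T * g + η)) + η) + L * (2 * (T * g + η)) ^ 2)
      = T * L * (2 * (T * g) * (T * g + η) + 4 * (T * g + η) ^ 2) + T * g * η := by ring
    _ ≤ 1 / 32 * (2 * (T * g) * (T * g + η) + 4 * (T * g + η) ^ 2) + T * g * η := by gcongr
    _ ≤ 3 / 8 * (T * g) ^ 2 + 5 * η ^ 2 := by nlinarith [sq_nonneg (T * g - 8 * η)]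
    _ = T * (3 / 8 * T * g ^ 2 + 5 / T * η ^ 2) := by field_simp

theorem le_sub_add_of_gradient_block (hf : Differentiable ℝ f) (hγ : IsStepClock α γ)
    (hS : Convex ℝ S) (hK : LipschitzOnWith K (∇ f) S) (hx : ∀ n, x n ∈ S)
    (hrec : ∀ n, x (n + 1) = x n - α n • (∇ f (x n) + z n)) {T η : ℝ} (hT : 0 < T) (hη : 0 ≤ η)
    (hTK : T * K ≤ 1 / 32) {n m : ℕ} (hnm : n ≤ m) (hduration : γ m - γ n ∈ Set.Icc (T / 2) T)
    (hz : ∀ k, n ≤ k → k ≤ m → ‖∑ i ∈ Finset.Ico n k, α i • z i‖ ≤ η) :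
    f (x m) ≤ f (x n) - T / 8 * ‖∇ f (x n)‖ ^ 2 + 5 / T * η ^ 2 := by
  set g := ‖∇ f (x n)‖
  set D := 2 * (T * g + η)
  have hdisp := norm_sub_le_of_gradient_block hγ hK hx hrec hT.le hη (by linarith) hduration.2 hz
  have hcurvature := norm_sum_gradient_sub_le hγ hK hx hnm hduration.2
    (by positivity : 0 ≤ D) fun i hni him ↦ hdisp i hni him.le
  have hinner : inner ℝ (∇ f (x n)) (x m - x n) ≤ -(T / 2 * g ^ 2) + g * (T * K * D + η) := by
    rw [sub_eq_of_gradient_step hγ hrec hnm, sub_sub, inner_sub_right, inner_neg_right,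
      inner_smul_right, real_inner_self_eq_norm_sq, sub_eq_add_neg]
    refine add_le_add (neg_le_neg (by gcongr; exact hduration.1)) ?_
    exact (neg_le_abs _).trans ((abs_real_inner_le_norm _ _).trans
      (by gcongr; exact norm_add_le_of_le hcurvature (hz m hnm le_rfl)))
  calc f (x m) ≤ f (x n) + inner ℝ (∇ f (x n)) (x m - x n) + K * ‖x m - x n‖ ^ 2 := by
        linarith [(abs_le.1 (abs_sub_sub_inner_gradient_le hf hS hK (hx n) (hx m))).2]
    _ ≤ f (x n) + (-(T / 2 * g ^ 2) + g * (T * K * D + η)) + K * D ^ 2 := by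
        gcongr
        exact hdisp m hnm le_rfl
    _ ≤ f (x n) - T / 8 * g ^ 2 + 5 / T * η ^ 2 := by
        linarith [block_error_le hT (norm_nonneg _ : 0 ≤ g) hη hTK]

end GradientBlock

section BlockDescent

variable {E : Type*} [NormedAddCommGroup E] [InnerProductSpace ℝ E] [CompleteSpace E] {f : E → ℝ}
  {S : Set E} {L : ℝ≥0} {α γ : ℕ → ℝ} {x z : ℕ → E}

/-- Along the subsequence `φ`, the path `x` behaves like a gradient method for `f` with noise level
`s`: at block `j` the error is of relative order `s * j ^ (-r)`, both in the displacement within the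
block and (squared) in the decrease of `f`. -/
structure HasBlockDescent (f : E → ℝ) (x : ℕ → E) (φ : ℕ → ℕ) (c K D r s : ℝ) : Prop where
  dist_le : ∀ᶠ j : ℕ in atTop, ∀ k, φ j ≤ k → k ≤ φ (j + 1) →
    dist (x k) (x (φ j)) ≤ D * (‖∇ f (x (φ j))‖ + s * (j : ℝ) ^ (-r))
  descent : ∀ᶠ j : ℕ in atTop, f (x (φ (j + 1))) ≤
    f (x (φ j)) - c * ‖∇ f (x (φ j))‖ ^ 2 + K * s ^ 2 * (j : ℝ) ^ (-(2 * r))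

theorem IsBlockPartition.hasBlockDescent {φ : ℕ → ℕ} {r s T : ℝ} (hφ : IsBlockPartition γ T φ)
    (hf : Differentiable ℝ f) (hγ : IsStepClock α γ) (hS : Convex ℝ S)
    (hL : LipschitzOnWith L (∇ f) S) (hx : ∀ n, x n ∈ S)
    (hrec : ∀ n, x (n + 1) = x n - α n • (∇ f (x n) + z n)) (hT : 0 < T) (hT₁ : T ≤ 1)
    (hTL : T * L ≤ 1 / 32) (hr : 0 ≤ r) (hs : 0 ≤ s) (hz : NoiseBound α γ z r s) :
    HasBlockDescent f x φ (T / 8) (5 / T * ((T / 2) ^ (-r)) ^ 2) (2 * (T + (T / 2) ^ (-r)))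
      r s := by
  set H := (T / 2) ^ (-r)
  have hblock : ∀ᶠ j : ℕ in atTop, ∀ k, φ j ≤ k → k ≤ φ (j + 1) →
      ‖∑ i ∈ Finset.Ico (φ j) k, α i • z i‖ ≤ s * (H * (j : ℝ) ^ (-r)) := by
    filter_upwards [hφ.strictMono.tendsto_atTop.eventually hz, eventually_ge_atTop 1]
      with j hj hj₁ k hjk hkj
    refine (hj k hjk ?_).trans ?_
    · linarith [hγ.monotone_time hkj, (hφ.duration_mem j).2]
    · rw [← Real.mul_rpow (by positivity) (Nat.cast_nonneg j)]
      gcongr ?_ * ?_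
      exact Real.rpow_le_rpow_of_nonpos (by positivity) (hφ.mul_le_time j) (neg_nonpos.2 hr)
  refine ⟨hblock.mono fun j hj k hjk hkj ↦ ?_, hblock.mono fun j hj ↦ ?_⟩
  · have h := norm_sub_le_of_gradient_block hγ hL hx hrec hT.le (by positivity) (by linarith)
      (hφ.duration_mem j).2 hj k hjk hkj
    have hT' : T * ‖∇ f (x (φ j))‖ ≤ (T + H) * ‖∇ f (x (φ j))‖ := by
      gcongr
      exact le_add_of_nonneg_right (by positivity)
    have hH : s * (H * (j : ℝ) ^ (-r)) ≤ (T + H) * (s * (j : ℝ) ^ (-r)) := by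
      rw [mul_left_comm]
      gcongr
      exact le_add_of_nonneg_left hT.le
    rw [dist_eq_norm]
    linarith
  · have h := le_sub_add_of_gradient_block hf hγ hS hL hx hrec hT (by positivity) hTL
      (hφ.strictMono.monotone j.le_succ) (hφ.duration_mem j) hj
    refine h.trans_eq ?_
    rw [mul_comm 2 r, ← neg_mul, Real.rpow_mul (Nat.cast_nonneg j), Real.rpow_two]
    ring

theorem exists_hasBlockDescent (hf : Differentiable ℝ f) (hγ : IsStepClock α γ) (hS : Convex ℝ S)
    (hL : LipschitzOnWith L (∇ f) S) (hx : ∀ n, x n ∈ S)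
    (hrec : ∀ n, x (n + 1) = x n - α n • (∇ f (x n) + z n)) {r : ℝ} (hr : 0 ≤ r) :
    ∃ φ c K D t, StrictMono φ ∧ 0 < c ∧ 0 ≤ K ∧ 0 < D ∧ 0 < t ∧
      (∀ j : ℕ, 1 ≤ j → γ (φ (j + 1)) ≤ t * j) ∧
      ∀ s, 0 ≤ s → NoiseBound α γ z r s → HasBlockDescent f x φ c K D r s := by
  set T : ℝ := 1 / (32 * (L + 1)) with hT
  have hT₀ : 0 < T := by positivity
  have hT₁ : T ≤ 1 := by
    rw [hT, div_le_one (by positivity)]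
    linarith [L.coe_nonneg]
  have hTL : T * L ≤ 1 / 32 := by
    rw [hT, div_mul_eq_mul_div, one_mul, div_le_div_iff₀ (by positivity) (by norm_num)]
    linarith
  obtain ⟨φ, hφ⟩ := hγ.exists_isBlockPartition hT₀
  obtain ⟨t, ht, hφt⟩ := hφ.exists_time_le
  exact ⟨φ, _, _, _, t, hφ.strictMono, by positivity, by positivity, by positivity, ht, hφt,
    fun s hs hz ↦ hφ.hasBlockDescent hf hγ hS hL hx hrec hT₀ hT₁ hTL hr hs hz⟩

namespace HasBlockDescent

variable {φ : ℕ → ℕ} {c K D r s : ℝ}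

theorem exists_tendsto (h : HasBlockDescent f x φ c K D r s) (hf : Differentiable ℝ f)
    (hS : Convex ℝ S) (hL : LipschitzOnWith L (∇ f) S) (hx : ∀ n, x n ∈ S) (hφ : StrictMono φ)
    (hc : 0 < c) (hK : 0 ≤ K) (hr : 1 < r) {B : ℝ} (hB : ∀ n, B ≤ f (x n)) :
    ∃ l, Tendsto (fun n ↦ f (x n)) atTop (𝓝 l) := by
  set g : ℕ → ℝ := fun j ↦ ‖∇ f (x (φ j))‖
  have ha : 0 < 2 * r - 1 := by linarith
  have hKs : 0 ≤ K * s ^ 2 := by positivity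
  have hdescent := eventually_descent_add_powerTail (y := fun j ↦ f (x (φ j))) (g := g) (c := c)
    hKs ha (by simpa only [sub_add_cancel] using h.descent)
  obtain ⟨⟨l, hl⟩, hg₀⟩ := exists_tendsto_of_descent (B := B)
    (w := fun j ↦ f (x (φ j)) + powerTail (K * s ^ 2) (2 * r - 1) j) hc (fun j ↦ norm_nonneg _)
    (fun j ↦ le_add_of_le_of_nonneg (hB _) (powerTail_nonneg hKs ha.le (Nat.cast_nonneg j)))
    hdescent
  have hblocks : Tendsto (fun j ↦ f (x (φ j))) atTop (𝓝 l) := by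
    exact (sub_zero l ▸ hl.sub (tendsto_powerTail (K * s ^ 2) ha)).congr
      fun j ↦ add_sub_cancel_right _ _
  set d : ℕ → ℝ := fun j ↦ D * (g j + s * (j : ℝ) ^ (-r))
  have hd₀ : Tendsto d atTop (𝓝 0) := by
    simpa using (hg₀.add (((tendsto_rpow_neg_atTop (by linarith : 0 < r)).comp
      tendsto_natCast_atTop_atTop).const_mul s)).const_mul D
  refine ⟨l, tendsto_of_tendsto_blocks (d := fun j ↦ g j * d j + L * d j ^ 2) hφ hblocks
    (by simpa using (hg₀.mul hd₀).add ((hd₀.pow 2).const_mul (L : ℝ))) ?_⟩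
  filter_upwards [h.dist_le] with j hj k hjk hkj
  have hk : ‖x k - x (φ j)‖ ≤ d j := dist_eq_norm (x k) _ ▸ hj k hjk hkj
  refine (abs_sub_le_norm_gradient_mul_add hf hS hL (hx (φ j)) (hx k)).trans ?_
  gcongr

theorem eventually_rpow_mul_dist_le (h : HasBlockDescent f x φ c K D r s) (hφ : StrictMono φ)
    (hD : 0 ≤ D) (hs : 0 ≤ s) {C t ρ : ℝ} (hρ : 1 < ρ) (hρr : ρ ≤ r) (hγ : IsStepClock α γ)
    (ht : 0 ≤ t) (hφt : ∀ j : ℕ, 1 ≤ j → γ (φ (j + 1)) ≤ t * j)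
    (hsum : ∀ᶠ N : ℕ in atTop, ∀ m,
      ∑ j ∈ Finset.Ico N m, ‖∇ f (x (φ j))‖ ≤ C * s * (N : ℝ) ^ (-(ρ - 1))) :
    ∀ᶠ n in atTop, ∀ k, n ≤ k →
      γ n ^ (ρ - 1) * ‖x k - x n‖ ≤ 2 * t ^ (ρ - 1) * (D * (C + powerTail 1 (r - 1) 1)) * s := by
  have hrate := eventually_rpow_mul_dist_le_of_blocks (q := ρ - 1)
    (A := D * ((C + powerTail 1 (r - 1) 1) * s)) hφ hγ.monotone_time hγ.time_nonneg ht hφt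
    (by linarith) h.dist_le ?_
  · filter_upwards [hrate] with n hn k hnk
    rw [← dist_eq_norm]
    exact (hn k hnk).trans_eq (by ring)
  filter_upwards [hsum, eventually_ge_atTop 1] with N hN hN₁ m
  have hr : 0 < r - 1 := by linarith
  have htail : ∑ j ∈ Finset.Ico N m, (j : ℝ) ^ (-r) ≤
      powerTail 1 (r - 1) 1 * (N : ℝ) ^ (-(ρ - 1)) := by
    have hN_one : (1 : ℝ) ≤ N := by exact_mod_cast hN₁
    rcases le_total N m with hNm | hmN
    · calc ∑ j ∈ Finset.Ico N m, (j : ℝ) ^ (-r) ≤ powerTail 1 (r - 1) N := by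
            simpa only [sub_add_cancel] using sum_Ico_rpow_le_powerTail hr hN₁ hNm
        _ ≤ powerTail 1 (r - 1) 1 * (N : ℝ) ^ (-(ρ - 1)) := by
            unfold powerTail
            rw [Real.one_rpow, mul_one]
            gcongr
    · rw [Finset.Ico_eq_empty_of_le hmN, Finset.sum_empty]
      exact mul_nonneg (powerTail_nonneg zero_le_one hr.le zero_le_one) (by positivity)
  calc ∑ j ∈ Finset.Ico N m, D * (‖∇ f (x (φ j))‖ + s * (j : ℝ) ^ (-r))
      = D * (∑ j ∈ Finset.Ico N m, ‖∇ f (x (φ j))‖ + s * ∑ j ∈ Finset.Ico N m, (j : ℝ) ^ (-r)) := by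
        rw [← Finset.mul_sum, Finset.sum_add_distrib, ← Finset.mul_sum]
    _ ≤ D * (C * s * (N : ℝ) ^ (-(ρ - 1)) +
          s * (powerTail 1 (r - 1) 1 * (N : ℝ) ^ (-(ρ - 1)))) := by
        gcongr
        exact hN m
    _ = D * ((C + powerTail 1 (r - 1) 1) * s) * (N : ℝ) ^ (-(ρ - 1)) := by ring

end HasBlockDescent

theorem exists_rpow_mul_norm_sub_le (hf : Differentiable ℝ f) (hγ : IsStepClock α γ)
    (hS : Convex ℝ S) (hL : LipschitzOnWith L (∇ f) S) (hx : ∀ n, x n ∈ S)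
    (hrec : ∀ n, x (n + 1) = x n - α n • (∇ f (x n) + z n)) {l r ρ : ℝ}
    (hl : Tendsto (fun n ↦ f (x n)) atTop (𝓝 l)) (hρ : 1 < ρ) (hρr : ρ ≤ r) :
    ∃ C κ, 0 < C ∧ 0 < κ ∧ ∀ s, 0 < s → NoiseBound α γ z r s →
      (∀ᶠ n in atTop, 0 < f (x n) - l → (f (x n) - l) ^ (1 + 1 / (2 * ρ - 1)) ≤
        κ * s ^ (2 / (2 * ρ - 1)) * ‖∇ f (x n)‖ ^ 2) →
      ∀ᶠ n in atTop, ∀ k, n ≤ k → γ n ^ (ρ - 1) * ‖x k - x n‖ ≤ C * s := by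
  obtain ⟨φ, c, K, D, t, hφ, hc, hK, hD, ht, hφt, hblock⟩ :=
    exists_hasBlockDescent hf hγ hS hL hx hrec (by linarith : 0 ≤ r)
  obtain ⟨C, κ, hC, hκ, hrate⟩ := exists_sum_Ico_le_mul_of_perturbed_descent hc hK hρ hρr
  have htail := powerTail_nonneg zero_le_one (by linarith : 0 ≤ r - 1) zero_le_one
  refine ⟨2 * t ^ (ρ - 1) * (D * (C + powerTail 1 (r - 1) 1)), κ, by positivity, hκ,
    fun s hs hz hsuper ↦ ?_⟩
  have h := hblock s hs.le hz
  refine h.eventually_rpow_mul_dist_le hφ hD.le hs.le hρ hρr hγ ht.le hφt <|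
    hrate s hs (fun j ↦ f (x (φ j)) - l) _ (fun j ↦ norm_nonneg _) ?_
      (h.descent.mono fun j hj ↦ by linarith) (hφ.tendsto_atTop.eventually hsuper)
  simpa using (hl.comp hφ.tendsto_atTop).sub_const l

theorem exists_tendsto_of_noiseBound (hf : Differentiable ℝ f) (hγ : IsStepClock α γ)
    (hS : Convex ℝ S) (hL : LipschitzOnWith L (∇ f) S) (hx : ∀ n, x n ∈ S)
    (hrec : ∀ n, x (n + 1) = x n - α n • (∇ f (x n) + z n)) {B r s : ℝ} (hB : ∀ n, B ≤ f (x n))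
    (hr : 1 < r) (hs : 0 ≤ s) (hz : NoiseBound α γ z r s) :
    ∃ l, Tendsto (fun n ↦ f (x n)) atTop (𝓝 l) := by
  obtain ⟨φ, c, K, D, t, hφ, hc, hK, -, -, -, hblock⟩ :=
    exists_hasBlockDescent hf hγ hS hL hx hrec (by linarith : 0 ≤ r)
  exact (hblock s hs hz).exists_tendsto hf hS hL hx hφ hc hK hr hB

end BlockDescent

section ClusterThickening

variable {E : Type*} [NormedAddCommGroup E] {ρ : E → ℝ} {u : ℕ → E}

/-- The set `Q̂` of the paper: the closure of the union of the balls of radius `ρ x` around the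
accumulation points `x` of `u`. -/
def clusterThickening (ρ : E → ℝ) (u : ℕ → E) : Set E :=
  closure (⋃ x ∈ {x | MapClusterPt x atTop u}, Metric.closedBall x (ρ x))

theorem closedBall_subset_clusterThickening {x : E} (hx : MapClusterPt x atTop u) :
    Metric.closedBall x (ρ x) ⊆ clusterThickening ρ u :=
  (Set.subset_biUnion_of_mem (u := fun x ↦ Metric.closedBall x (ρ x)) hx).trans subset_closure

theorem isCompact_clusterThickening [ProperSpace E] {B R : ℝ} (hu : ∀ n, ‖u n‖ ≤ B)
    (hρ : ∀ x, ρ x ≤ R) : IsCompact (clusterThickening ρ u) := by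
  refine (isCompact_closedBall (0 : E) (B + R)).of_isClosed_subset isClosed_closure <|
    closure_minimal (Set.iUnion₂_subset fun x hx ↦ ?_) Metric.isClosed_closedBall
  have hxB : x ∈ Metric.closedBall (0 : E) B :=
    Metric.isClosed_closedBall.mem_of_mapClusterPt hx <|
      Eventually.of_forall fun n ↦ mem_closedBall_zero_iff.2 (hu n)
  refine Metric.closedBall_subset_closedBall' ?_
  linarith [hρ x, Metric.mem_closedBall.1 hxB]

theorem eventually_mem_clusterThickening [ProperSpace E] {B : ℝ} (hu : ∀ n, ‖u n‖ ≤ B)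
    (hρ : ∀ x, 0 < ρ x) : ∀ᶠ n in atTop, u n ∈ clusterThickening ρ u := by
  by_contra hfar
  set U : Set E := ⋃ x ∈ {x | MapClusterPt x atTop u}, Metric.ball x (ρ x)
  have hU : U ⊆ clusterThickening ρ u := Set.iUnion₂_subset fun x hx ↦
    Metric.ball_subset_closedBall.trans (closedBall_subset_clusterThickening hx)
  have hfreq : ∃ᶠ n in atTop, u n ∈ Metric.closedBall 0 B \ U :=
    (not_eventually.1 hfar).mono fun n hn ↦ ⟨mem_closedBall_zero_iff.2 (hu n), fun h ↦ hn (hU h)⟩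
  obtain ⟨x, hx, hcluster⟩ := ((isCompact_closedBall (0 : E) B).diff
    (isOpen_biUnion fun _ _ ↦ Metric.isOpen_ball)).exists_mapClusterPt_of_frequently hfreq
  exact hx.2 (Set.mem_biUnion hcluster (Metric.mem_ball_self (hρ x)))

theorem exists_mapClusterPt_eq_liminf [ProperSpace E] {f : E → ℝ} (hf : Continuous f) {B : ℝ}
    (hu : ∀ n, ‖u n‖ ≤ B) :
    ∃ x, MapClusterPt x atTop u ∧ f x = liminf (fun n ↦ f (u n)) atTop := by
  have hball (n : ℕ) : u n ∈ Metric.closedBall 0 B := mem_closedBall_zero_iff.2 (hu n)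
  have himage := ((isCompact_closedBall (0 : E) B).image hf).isBounded
  have hbelow : IsBoundedUnder (· ≥ ·) atTop (fun n ↦ f (u n)) :=
    isBoundedUnder_of (himage.bddBelow.imp fun b hb n ↦ hb ⟨_, hball n, rfl⟩)
  have habove : IsBoundedUnder (· ≤ ·) atTop (fun n ↦ f (u n)) :=
    isBoundedUnder_of (himage.bddAbove.imp fun b hb n ↦ hb ⟨_, hball n, rfl⟩)
  obtain ⟨ψ, hψ, hlim⟩ :=
    (MapClusterPt.liminf habove.isCoboundedUnder_ge hbelow).tendsto_subseq
  obtain ⟨x, -, hx⟩ := (isCompact_closedBall (0 : E) B).exists_mapClusterPt (f := atTop)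
    (u := u ∘ ψ) (tendsto_principal.2 (Eventually.of_forall fun n ↦ hball (ψ n)))
  refine ⟨x, hx.of_comp hψ.tendsto_atTop, ?_⟩
  exact eq_of_nhds_neBot (ClusterPt.mono (hx.continuousAt_comp hf.continuousAt) hlim)

theorem liminf_mem_image_clusterThickening [ProperSpace E] {f : E → ℝ} (hf : Continuous f) {B : ℝ}
    (hu : ∀ n, ‖u n‖ ≤ B) (hρ : ∀ x, 0 ≤ ρ x) :
    liminf (fun n ↦ f (u n)) atTop ∈ f '' clusterThickening ρ u := by
  obtain ⟨x, hx, hfx⟩ := exists_mapClusterPt_eq_liminf hf hu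
  exact ⟨x, closedBall_subset_clusterThickening hx (Metric.mem_closedBall_self (hρ x)), hfx⟩

end ClusterThickening

section Rate

/-- The exponent `min {r, r̂}` of the convergence rate, where `r̂ = 1 / (2 - μ)` is read as `∞` when
`μ = 2`. -/
noncomputable def rateExponent (r μ : ℝ) : ℝ :=
  if μ < 2 then min r (1 / (2 - μ)) else r

/-- The factor `φ(ξ)` by which the noise level `ξ` enters the convergence rate, where
`r̂ = 1 / (2 - μ)` is read as `∞` when `μ = 2`. -/
noncomputable def noiseFactor (r μ ξ : ℝ) : ℝ :=
  if μ = 2 ∨ r < 1 / (2 - μ) then ξ else if r = 1 / (2 - μ) then 1 + ξ else 1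

section Exponents

variable {r μ ξ : ℝ}

theorem rateExponent_of_noise_dominated (h : μ = 2 ∨ r < 1 / (2 - μ)) : rateExponent r μ = r := by
  unfold rateExponent
  split_ifs with hμ
  · exact min_eq_left (h.resolve_left hμ.ne).le
  · rfl

theorem rateExponent_of_gradient_dominated (hμ : μ < 2) (h : 1 / (2 - μ) ≤ r) :
    rateExponent r μ = 1 / (2 - μ) := by
  rw [rateExponent, if_pos hμ, min_eq_right h]

theorem one_le_noiseFactor (hξ : 0 ≤ ξ) (h : ¬(μ = 2 ∨ r < 1 / (2 - μ))) :
    1 ≤ noiseFactor r μ ξ := by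
  rw [noiseFactor, if_neg h]
  split_ifs <;> linarith

theorem two_div_lt_of_noise_dominated (hr : 1 < r) (hμ : μ ∈ Set.Ioc 1 2)
    (h : μ = 2 ∨ r < 1 / (2 - μ)) : 2 / μ < 1 + 1 / (2 * r - 1) := by
  have hμ₀ : 0 < μ := by linarith [hμ.1]
  have hp : 0 < 2 * r - 1 := by linarith
  rw [one_add_div hp.ne', div_lt_div_iff₀ hμ₀ hp]
  rcases hμ.2.eq_or_lt with rfl | hμ₂
  · linarith
  · have := (lt_div_iff₀ (by linarith)).1 (h.resolve_left hμ₂.ne)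
    linarith

theorem one_add_one_div_eq_two_div (hμ₀ : 0 < μ) (hμ : μ < 2) :
    1 + 1 / (2 * (1 / (2 - μ)) - 1) = 2 / μ := by
  have h : (2 - μ) ≠ 0 := by linarith
  rw [show 2 * (1 / (2 - μ)) - 1 = μ / (2 - μ) by field_simp; ring]
  field_simp
  ring

end Exponents

theorem rpow_two_div_le_of_le_mul_rpow {t M g μ : ℝ} (ht : 0 ≤ t) (hM : 0 ≤ M) (hg : 0 ≤ g)
    (hμ : 0 < μ) (h : t ≤ M * g ^ μ) : t ^ (2 / μ) ≤ M ^ (2 / μ) * g ^ 2 := by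
  calc t ^ (2 / μ) ≤ (M * g ^ μ) ^ (2 / μ) := by gcongr
    _ = M ^ (2 / μ) * g ^ 2 := by
      rw [Real.mul_rpow hM (by positivity), ← Real.rpow_mul hg, mul_div_cancel₀ 2 hμ.ne',
        Real.rpow_two]

theorem eventually_rpow_two_div_le_of_lojasiewicz {y g : ℕ → ℝ} {l δ M μ : ℝ}
    (hy : Tendsto y atTop (𝓝 l)) (hg : ∀ n, 0 ≤ g n) (hδ : 0 < δ) (hM : 0 ≤ M) (hμ : 0 < μ)
    (h : ∀ᶠ n in atTop, |y n - l| ≤ δ → |y n - l| ≤ M * g n ^ μ) :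
    ∀ᶠ n in atTop, 0 < y n - l → (y n - l) ^ (2 / μ) ≤ M ^ (2 / μ) * g n ^ 2 := by
  filter_upwards [h, hy.eventually (Metric.closedBall_mem_nhds l hδ)] with n hn hclose hpos
  exact rpow_two_div_le_of_le_mul_rpow hpos.le hM (hg n) hμ ((le_abs_self _).trans (hn hclose))

theorem eventually_rpow_le_of_lt {u v : ℕ → ℝ} {A κ a e : ℝ} (hu : Tendsto u atTop (𝓝 0))
    (hκ : 0 < κ) (hae : a < e) (hv : ∀ n, 0 ≤ v n)
    (h : ∀ᶠ n in atTop, 0 < u n → u n ^ a ≤ A * v n) :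
    ∀ᶠ n in atTop, 0 < u n → u n ^ e ≤ κ * v n := by
  have hgap : Tendsto (fun n ↦ u n ^ (e - a) * A) atTop (𝓝 0) := by
    have := (Real.continuousAt_rpow_const 0 (e - a) (Or.inr (sub_pos.2 hae).le)).tendsto.comp hu
    rw [Real.zero_rpow (sub_pos.2 hae).ne'] at this
    simpa only [zero_mul, Function.comp_def] using this.mul_const A
  filter_upwards [h, hgap.eventually_le_const hκ] with n hn hsmall hpos
  calc u n ^ e = u n ^ (e - a) * u n ^ a := by rw [← Real.rpow_add hpos, sub_add_cancel]
    _ ≤ u n ^ (e - a) * (A * v n) := by gcongr; exact hn hpos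
    _ = u n ^ (e - a) * A * v n := by ring
    _ ≤ κ * v n := mul_le_mul_of_nonneg_right hsmall (hv n)

variable {E : Type*} [NormedAddCommGroup E] [InnerProductSpace ℝ E] {f : E → ℝ} {α γ : ℕ → ℝ}
  {x z : ℕ → E}

section LipschitzGradient

variable [CompleteSpace E] {S : Set E} {L : ℝ≥0} {l r a A Ξ : ℝ}

theorem exists_rpow_mul_norm_sub_le_of_noise_dominated (hf : Differentiable ℝ f)
    (hγ : IsStepClock α γ) (hS : Convex ℝ S) (hL : LipschitzOnWith L (∇ f) S) (hx : ∀ n, x n ∈ S)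
    (hrec : ∀ n, x (n + 1) = x n - α n • (∇ f (x n) + z n))
    (hl : Tendsto (fun n ↦ f (x n)) atTop (𝓝 l)) (hr : 1 < r)
    (hΞ : 0 ≤ Ξ) (hz : ∀ s, Ξ < s → NoiseBound α γ z r s) (ha : a < 1 + 1 / (2 * r - 1))
    (hloj : ∀ᶠ n in atTop, 0 < f (x n) - l → (f (x n) - l) ^ a ≤ A * ‖∇ f (x n)‖ ^ 2) :
    ∃ C, 1 ≤ C ∧ ∀ c, C * Ξ < c →
      ∀ᶠ n in atTop, ∀ k, n ≤ k → γ n ^ (r - 1) * ‖x k - x n‖ ≤ c := by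
  obtain ⟨C, κ, hC, hκ, hrate⟩ := exists_rpow_mul_norm_sub_le hf hγ hS hL hx hrec hl hr le_rfl
  refine ⟨max 1 C, le_max_left _ _, fun c hc ↦ ?_⟩
  have hΞc : Ξ < c / C := by
    rw [lt_div_iff₀' hC]
    exact (mul_le_mul_of_nonneg_right (le_max_right 1 C) hΞ).trans_lt hc
  have hs : 0 < c / C := hΞ.trans_lt hΞc
  simpa only [mul_div_cancel₀ c hC.ne'] using hrate (c / C) hs (hz _ hΞc) <|
    eventually_rpow_le_of_lt (by simpa using hl.sub_const l) (by positivity) ha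
      (fun n ↦ by positivity) hloj

theorem exists_rpow_mul_norm_sub_le_of_gradient_dominated (hf : Differentiable ℝ f)
    (hγ : IsStepClock α γ) (hS : Convex ℝ S) (hL : LipschitzOnWith L (∇ f) S) (hx : ∀ n, x n ∈ S)
    (hrec : ∀ n, x (n + 1) = x n - α n • (∇ f (x n) + z n))
    (hl : Tendsto (fun n ↦ f (x n)) atTop (𝓝 l)) {ρ : ℝ} (hρ : 1 < ρ) (hρr : ρ ≤ r)
    (hz : ∀ s, Ξ < s → NoiseBound α γ z r s)
    (hloj : ∀ᶠ n in atTop, 0 < f (x n) - l →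
      (f (x n) - l) ^ (1 + 1 / (2 * ρ - 1)) ≤ A * ‖∇ f (x n)‖ ^ 2) :
    ∃ C, 1 ≤ C ∧ ∀ᶠ n in atTop, ∀ k, n ≤ k → γ n ^ (ρ - 1) * ‖x k - x n‖ ≤ C := by
  obtain ⟨C, κ, -, hκ, hrate⟩ := exists_rpow_mul_norm_sub_le hf hγ hS hL hx hrec hl hρ hρr
  have hp : 0 < 2 * ρ - 1 := by linarith
  have hlarge := (tendsto_rpow_atTop (div_pos two_pos hp)).const_mul_atTop hκ
  obtain ⟨s, ⟨hAs, hΞs⟩, hs⟩ := ((hlarge.eventually_ge_atTop A).and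
    (eventually_gt_atTop Ξ)).and (eventually_gt_atTop 0) |>.exists
  have hsuper := hrate s hs (hz s hΞs) <| hloj.mono fun n hn hpos ↦
    (hn hpos).trans (mul_le_mul_of_nonneg_right hAs (by positivity))
  exact ⟨max 1 (C * s), le_max_left _ _, hsuper.mono fun n hn k hk ↦
    (hn k hk).trans (le_max_right _ _)⟩

end LipschitzGradient

theorem IsStepClock.noiseBound_of_limsup_lt {r s : ℝ} (hγ : IsStepClock α γ) (hr : 0 ≤ r)
    (hz : IsBoundedUnder (· ≤ ·) atTop (weightedNoise α γ r z))
    (hs : limsup (weightedNoise α γ r z) atTop < s) : NoiseBound α γ z r s :=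
  hγ.noiseBound hr ((eventually_lt_of_limsup_lt hs hz).mono fun _ ↦ le_of_lt)

theorem stochastic_gradient_tail_oscillation_bound_general [ProperSpace E]
    (hf : Differentiable ℝ f) (hlip : LocallyLipschitz (∇ f)) (hγ : IsStepClock α γ)
    (hrec : ∀ n, x (n + 1) = x n - α n • (∇ f (x n) + z n)) {B : ℝ} (hx : ∀ n, ‖x n‖ ≤ B) {r : ℝ}
    (hr : 1 < r) (hz : IsBoundedUnder (· ≤ ·) atTop (weightedNoise α γ r z)) {δ M μ : ℝ}
    (hδ : 0 < δ) (hM : 0 ≤ M) (hμ : μ ∈ Set.Ioc 1 2)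
    (hloj : ∀ᶠ n in atTop, |f (x n) - liminf (fun i ↦ f (x i)) atTop| ≤ δ →
      |f (x n) - liminf (fun i ↦ f (x i)) atTop| ≤ M * ‖∇ f (x n)‖ ^ μ) :
    ∃ C, 1 ≤ C ∧ ∀ c, C * noiseFactor r μ (limsup (weightedNoise α γ r z) atTop) < c →
      ∀ᶠ n in atTop, ∀ k, n ≤ k → γ n ^ (rateExponent r μ - 1) * ‖x k - x n‖ ≤ c := by
  set Ξ := limsup (weightedNoise α γ r z) atTop
  have hΞ : 0 ≤ Ξ := le_limsup_of_frequently_le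
    (Frequently.of_forall (weightedNoise_nonneg α γ r z)) hz
  have hnoise (s : ℝ) (hs : Ξ < s) : NoiseBound α γ z r s :=
    hγ.noiseBound_of_limsup_lt (by linarith) hz hs
  have hball (n : ℕ) : x n ∈ Metric.closedBall 0 B := mem_closedBall_zero_iff.2 (hx n)
  have hcompact := isCompact_closedBall (0 : E) B
  have hconvex := convex_closedBall (0 : E) B
  obtain ⟨L, hL⟩ := hlip.locallyLipschitzOn.exists_lipschitzOnWith_of_compact hcompact
  obtain ⟨b, hb⟩ := hcompact.bddBelow_image hf.continuous.continuousOn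
  obtain ⟨l, hl⟩ := exists_tendsto_of_noiseBound hf hγ hconvex hL hball hrec
    (fun n ↦ hb ⟨_, hball n, rfl⟩) hr (by linarith) (hnoise (Ξ + 1) (lt_add_one Ξ))
  rw [hl.liminf_eq] at hloj
  have hpower := eventually_rpow_two_div_le_of_lojasiewicz hl (fun n ↦ norm_nonneg (∇ f (x n))) hδ
    hM (by linarith [hμ.1]) hloj
  by_cases hcase : μ = 2 ∨ r < 1 / (2 - μ)
  · rw [rateExponent_of_noise_dominated hcase, noiseFactor, if_pos hcase]
    exact exists_rpow_mul_norm_sub_le_of_noise_dominated hf hγ hconvex hL hball hrec hl hr hΞ hnoise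
      (two_div_lt_of_noise_dominated hr hμ hcase) hpower
  · obtain ⟨hμ₂, hρr⟩ := not_or.1 hcase
    replace hμ₂ : μ < 2 := hμ.2.lt_of_ne hμ₂
    rw [not_lt] at hρr
    have hρ : 1 < 1 / (2 - μ) := by rw [lt_div_iff₀] <;> linarith [hμ.1]
    rw [← one_add_one_div_eq_two_div (by linarith [hμ.1]) hμ₂] at hpower
    rw [rateExponent_of_gradient_dominated hμ₂ hρr]
    obtain ⟨C, hC, hrate⟩ := exists_rpow_mul_norm_sub_le_of_gradient_dominated hf hγ hconvex hL
      hball hrec hl hρ hρr hnoise hpower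
    refine ⟨C, hC, fun c hc ↦ hrate.mono fun n hn k hk ↦ (hn k hk).trans ?_⟩
    exact (le_mul_of_one_le_right (by linarith) (one_le_noiseFactor hΞ hcase)).trans hc.le

/-- Assumption 1.3: `δ Q b`, `μ Q b`, `M Q b` are constants for the Łojasiewicz inequality of `f` on
the compact set `Q` at the level `b`. -/
def IsLojasiewiczData [CompleteSpace E] (f : E → ℝ) (δ μ M : Set E → ℝ → ℝ) : Prop :=
  ∀ Q : Set E, IsCompact Q → ∀ b ∈ f '' Q,
    δ Q b ∈ Set.Ioc (0 : ℝ) 1 ∧ μ Q b ∈ Set.Ioc (1 : ℝ) 2 ∧ 1 ≤ M Q b ∧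
    ∀ y ∈ Q, |f y - b| ≤ δ Q b → |f y - b| ≤ M Q b * ‖∇ f y‖ ^ μ Q b

theorem IsLojasiewiczData.exists_rpow_mul_norm_sub_le [ProperSpace E]
    {δ μ M : Set E → ℝ → ℝ} (hLoj : IsLojasiewiczData f δ μ M) (hf : Differentiable ℝ f)
    (hlip : LocallyLipschitz (∇ f)) (hγ : IsStepClock α γ)
    (hrec : ∀ n, x (n + 1) = x n - α n • (∇ f (x n) + z n)) (hx : ∃ B, ∀ n, ‖x n‖ ≤ B) {r : ℝ}
    (hr : 1 < r) (hz : IsBoundedUnder (· ≤ ·) atTop (weightedNoise α γ r z)) {ρ : E → ℝ} {R : ℝ}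
    (hρ : ∀ y, ρ y ∈ Set.Ioc 0 R) {μ' : ℝ}
    (hμ' : μ' = μ (clusterThickening ρ x) (liminf (fun n ↦ f (x n)) atTop)) :
    ∃ C, 1 ≤ C ∧ ∀ c, C * noiseFactor r μ' (limsup (weightedNoise α γ r z) atTop) < c →
      ∀ᶠ n in atTop, ∀ k, n ≤ k → γ n ^ (rateExponent r μ' - 1) * ‖x k - x n‖ ≤ c := by
  subst hμ'
  obtain ⟨B, hB⟩ := hx
  obtain ⟨hδ, hμ, hM, hineq⟩ := hLoj (clusterThickening ρ x)
    (isCompact_clusterThickening hB fun y ↦ (hρ y).2) (liminf (fun n ↦ f (x n)) atTop)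
    (liminf_mem_image_clusterThickening hf.continuous hB fun y ↦ (hρ y).1.le)
  exact stochastic_gradient_tail_oscillation_bound_general hf hlip hγ hrec hB hr hz hδ.1
    (zero_le_one.trans hM) hμ <|
    (eventually_mem_clusterThickening hB fun y ↦ (hρ y).1).mono fun n hn ↦ hineq (x n) hn

end Rate

/-- Lemma 1.25 of the paper: under Assumptions 1.1, 1.2, 1.3
there is a random variable `Ĉ₈ ∈ [1,∞)` such that, almost surely on `Λ`, for
every `ε > 0`: `limsup_n γ_n^q̂ · sup_{k ≥ n} ‖θ_k − θ_n‖ ≤ Ĉ₈ φ_ε(ξ)`, where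
`q̂ = min{r, r̂} − 1`.
(`limsup` is expressed via: for every `c > bound`, eventually all `k ≥ n`.) -/
theorem stochastic_gradient_tail_oscillation_bound
    {d : ℕ} (hd : 1 ≤ d)
    {Ω : Type} [MeasurableSpace Ω] (P : Measure Ω) [IsProbabilityMeasure P]
    (f : EuclideanSpace ℝ (Fin d) → ℝ)
    (hfd : Differentiable ℝ f)
    (hlip : LocallyLipschitz (fun x => gradient f x))
    (α : ℕ → ℝ) (hαpos : ∀ n, 0 < α n)
    (θ ξ : ℕ → Ω → EuclideanSpace ℝ (Fin d))
    (hrec : ∀ n ω, θ (n + 1) ω = θ n ω - α n • (gradient f (θ n ω) + ξ n ω))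
    -- Assumption 1.1
    (hα0 : Tendsto α atTop (nhds 0))
    (γ : ℕ → ℝ) (hγ : ∀ n, γ n = ∑ i ∈ Finset.range n, α i)
    (hαdiv : Tendsto γ atTop atTop)
    -- the interpolation index `a(n,t)`
    (a : ℕ → ℝ → ℕ)
    (ha : ∀ n t, 0 < t → a n t = sSup {k | n ≤ k ∧ γ k - γ n ≤ t})
    -- the event Λ
    (Λ : Set Ω) (hΛ : Λ = {ω | ∃ C, ∀ n, ‖θ n ω‖ ≤ C})
    -- Assumption 1.2
    (r : ℝ) (hr : 1 < r)
    (noise : ℕ → Ω → ℝ)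
    (hnoise : ∀ n ω, noise n ω =
      ⨆ k ∈ Set.Ico n (a n 1), ‖∑ i ∈ Finset.Icc n k, (α i * γ i ^ r) • ξ i ω‖)
    (hA12 : ∀ᵐ ω ∂P, ω ∈ Λ → IsBoundedUnder (· ≤ ·) atTop (fun n => noise n ω))
    (Xi : Ω → ℝ) (hXi : ∀ ω, Xi ω = Filter.limsup (fun n => noise n ω) atTop)
    -- Assumption 1.3 (Łojasiewicz-type gradient inequality, with a choice
    -- `δ_{Q,a}, μ_{Q,a}, M_{Q,a}` of the Łojasiewicz data for each compact `Q`
    -- and each value `a ∈ f(Q)`)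
    (δQ μQ MQ : Set (EuclideanSpace ℝ (Fin d)) → ℝ → ℝ)
    (hLoj : ∀ Q : Set (EuclideanSpace ℝ (Fin d)), IsCompact Q → ∀ b ∈ f '' Q,
      δQ Q b ∈ Set.Ioc (0 : ℝ) 1 ∧ μQ Q b ∈ Set.Ioc (1 : ℝ) 2 ∧ 1 ≤ MQ Q b ∧
      ∀ x ∈ Q, |f x - b| ≤ δQ Q b → |f x - b| ≤ MQ Q b * ‖gradient f x‖ ^ μQ Q b)
    -- the local Łojasiewicz data `δ_θ, μ_θ, M_θ` provided by Assumption 1.3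
    (δl μl Ml : EuclideanSpace ℝ (Fin d) → ℝ)
    (hδl : ∀ x, δl x ∈ Set.Ioc (0 : ℝ) 1)
    (hμl : ∀ x, μl x ∈ Set.Ioc (1 : ℝ) 2)
    (hMl : ∀ x, 1 ≤ Ml x)
    (hLocal : ∀ x y, ‖y - x‖ ≤ δl x → |f y - f x| ≤ Ml x * ‖gradient f y‖ ^ μl x)
    -- `f̂ = liminf_n f(θ_n)`
    (fhat : Ω → ℝ)
    (hfhat : ∀ ω, fhat ω = Filter.liminf (fun n => f (θ n ω)) atTop)
    -- `Â` = set of accumulation points of `{θ_n}`, and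
    -- `Q̂ = cl(⋃_{θ ∈ Â} {θ' : ‖θ' − θ‖ ≤ δ_θ/2})`
    (Ahat : Ω → Set (EuclideanSpace ℝ (Fin d)))
    (hAhat : ∀ ω, Ahat ω = {x | MapClusterPt x atTop (fun n => θ n ω)})
    (Qhat : Ω → Set (EuclideanSpace ℝ (Fin d)))
    (hQhat : ∀ ω, Qhat ω = closure (⋃ x ∈ Ahat ω, Metric.closedBall x (δl x / 2)))
    -- `μ̂ = μ_{Q̂,f̂}`, `r̂ = 1/(2−μ̂)` (`= ∞` if `μ̂ = 2`), `p̂ = μ̂ min{r,r̂}`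
    (μhat : Ω → ℝ) (hμhat : ∀ ω, μhat ω = μQ (Qhat ω) (fhat ω))
    (qhat : Ω → ℝ)
    (hqhat : ∀ ω, qhat ω =
      (if μhat ω < 2 then min r (1 / (2 - μhat ω)) else r) - 1)
    -- `φ_ε(ξ) = φ(ξ) + ε` where `φ(ξ) = ξ` if `r < r̂`, `1 + ξ` if `r = r̂`,
    -- and `1` if `r > r̂`
    (φe : Ω → ℝ → ℝ)
    (hφe : ∀ ω ε, φe ω ε =
      (if μhat ω = 2 ∨ r < 1 / (2 - μhat ω) then Xi ω
        else if r = 1 / (2 - μhat ω) then 1 + Xi ω else 1) + ε) :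
    ∃ C₈ : Ω → ℝ, (∀ ω, 1 ≤ C₈ ω) ∧
      ∀ᵐ ω ∂P, ω ∈ Λ → ∀ ε : ℝ, 0 < ε →
        ∀ c : ℝ, C₈ ω * φe ω ε < c →
          ∀ᶠ n in atTop, ∀ k, n ≤ k → γ n ^ qhat ω * ‖θ k ω - θ n ω‖ ≤ c := by
  obtain rfl : noise = fun n ω ↦ weightedNoise α γ r (fun i ↦ ξ i ω) n :=
    funext₂ fun n ω ↦ by rw [hnoise, ha n 1 one_pos]; rfl
  obtain rfl : Xi = fun ω ↦ limsup (weightedNoise α γ r fun i ↦ ξ i ω) atTop := funext hXi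
  have hδ (x) : δl x / 2 ∈ Set.Ioc 0 1 :=
    ⟨half_pos (hδl x).1, (half_le_self (hδl x).1.le).trans (hδl x).2⟩
  have hrate (ω) (hω : ω ∈ Λ)
      (hz : IsBoundedUnder (· ≤ ·) atTop (weightedNoise α γ r fun i ↦ ξ i ω)) :=
    IsLojasiewiczData.exists_rpow_mul_norm_sub_le hLoj hfd hlip ⟨hαpos, hγ, hα0, hαdiv⟩
      (fun n ↦ hrec n ω) (hΛ ▸ hω) hr hz hδ (μ' := μhat ω)
      (by rw [hμhat, hQhat, hAhat, hfhat]; rfl)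
  choose! C hC using hrate
  refine ⟨fun ω ↦ max 1 (C ω), fun ω ↦ le_max_left _ _, hA12.mono fun ω hbdd hω ε hε c hc ↦ ?_⟩
  obtain ⟨hC₁, hbound⟩ := hC ω hω (hbdd hω)
  beta_reduce at hc
  rw [max_eq_right hC₁, hφe] at hc
  rw [hqhat]
  refine hbound c (lt_trans ?_ hc)
  exact mul_lt_mul_of_pos_left (lt_add_of_pos_right _ hε) (one_pos.trans_le hC₁)
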